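/- arXiv:1601.07205 — 2 statements merged into one kernel-verified Lean document; each statement's English description precedes it below -/
import Mathlib

section
/- Let p > n ≥ 2, let N be a positive integer, let f : ℝⁿ → ℝᴺ be a continuous map belonging to the Sobolev space W^{1,p}(ℝⁿ;ℝᴺ), and let α ∈ (1, p/(p-(n-1))]. Let L be a one-dimensional linear subspace of ℝⁿ and set β = (n-1) - p(1 - 1/α). Then the set of points a in the orthogonal complement L^⊥ for which the α-dimensional Hausdorff measure of f(a + L) is nonzero has β-dimensional Hausdorff measure zero. -/
open Set MeasureTheory
open scoped ENNReal

/-!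
Since `p` exceeds the dimension, Morrey's inequality bounds the `p`-th power of the oscillation of
`f` on a ball of radius `r` by `r ^ (p - n)` times the energy of `f` in that ball, the energy being
the measure with density `‖g‖ ^ p`. Cover a unit segment of the line `a + L` by `N` balls of radius
`r = 1 / (2 * N)` centred on it. They overlap in null sets and project into the ball of radius `r`
around `a` in `Lᗮ`, so Hölder's inequality bounds the `p / α`-th power of the sum of
`diam (f B) ^ α` over these balls by `ν (B(a, r)) / r ^ β`, up to a constant, where `ν` is the
projection of the energy to `Lᗮ`. The projected energy is finite and absolutely continuous with
respect to `H^(n-1)`, and `β < n - 1`, so by a Besicovitch covering argument the quotient tends to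
zero as `r → 0` for `H^β`-almost every `a`.
-/

namespace BMT

open AffineMap ContinuousLinearMap Filter Metric Module
open scoped Convolution NNReal Topology

section Average

variable {Ω F : Type*} [MeasurableSpace Ω] [NormedAddCommGroup F] {P : Measure Ω} {p : ℝ}

lemma lintegral_enorm_le_lintegral_enorm_rpow [IsProbabilityMeasure P] {h : Ω → F}
    (hh : AEStronglyMeasurable h P) (hp : 1 ≤ p) :
    ∫⁻ ω, ‖h ω‖ₑ ∂P ≤ (∫⁻ ω, ‖h ω‖ₑ ^ p ∂P) ^ (1 / p) := by
  simpa [eLpNorm'] using eLpNorm'_le_eLpNorm'_of_exponent_le one_pos hp P hh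

lemma laverage_enorm_le_laverage_enorm_rpow [IsFiniteMeasure P] [NeZero P] {h : Ω → F}
    (hh : AEStronglyMeasurable h P) (hp : 1 ≤ p) :
    ⨍⁻ ω, ‖h ω‖ₑ ∂P ≤ (⨍⁻ ω, ‖h ω‖ₑ ^ p ∂P) ^ (1 / p) :=
  lintegral_enorm_le_lintegral_enorm_rpow (hh.smul_measure _) hp

end Average

lemma lintegral_Ioc_rpow_neg {s : ℝ} (hs : s < 1) :
    ∫⁻ t in Ioc (0 : ℝ) 1, ENNReal.ofReal (t ^ (-s)) = ENNReal.ofReal (1 - s)⁻¹ := by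
  have hint : IntegrableOn (fun t : ℝ ↦ t ^ (-s)) (Ioc 0 1) :=
    (intervalIntegrable_iff_integrableOn_Ioc_of_le zero_le_one).1
      (intervalIntegral.intervalIntegrable_rpow' (by linarith))
  have hnonneg : ∀ᵐ t : ℝ ∂volume.restrict (Ioc 0 1), 0 ≤ t ^ (-s) :=
    (ae_restrict_mem measurableSet_Ioc).mono fun t ht ↦ Real.rpow_nonneg ht.1.le _
  rw [← ofReal_integral_eq_lintegral_ofReal hint hnonneg,
    ← intervalIntegral.integral_of_le zero_le_one, integral_rpow (Or.inl (by linarith)),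
    Real.one_rpow, Real.zero_rpow (by linarith), neg_add_eq_sub, sub_zero, one_div]

section Morrey

variable {E V : Type*} [NormedAddCommGroup E] [NormedSpace ℝ E]
  [NormedAddCommGroup V] [NormedSpace ℝ V] {F : E → V}

lemma edist_le_lintegral_enorm_fderiv_lineMap (hF : ContDiff ℝ 1 F) (x y : E) :
    edist (F x) (F y) ≤
      (∫⁻ t in Ioc (0 : ℝ) 1, ‖fderiv ℝ F (lineMap x y t)‖ₑ) * edist x y := by
  have hderiv (t : ℝ) : HasDerivAt (F ∘ lineMap x y) (fderiv ℝ F (lineMap x y t) (y - x)) t :=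
    (hF.differentiable one_ne_zero _).hasFDerivAt.comp_hasDerivAt t hasDerivAt_lineMap
  have hFline : ContDiff ℝ 1 (F ∘ lineMap x y) := hF.comp (contDiff_lineMap x y)
  calc edist (F x) (F y) = ‖(F ∘ lineMap x y) (1 : ℝ) - (F ∘ lineMap x y) (0 : ℝ)‖ₑ := by
        simp [edist_comm (F x), edist_eq_enorm_sub]
    _ ≤ ∫⁻ t in Icc (0 : ℝ) 1, ‖deriv (F ∘ lineMap x y) t‖ₑ :=
        enorm_sub_le_lintegral_deriv_of_contDiffOn_Icc hFline.contDiffOn zero_le_one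
    _ ≤ ∫⁻ t in Icc (0 : ℝ) 1, ‖fderiv ℝ F (lineMap x y t)‖ₑ * edist x y := by
        refine lintegral_mono fun t ↦ ?_
        rw [(hderiv t).deriv, edist_comm, edist_eq_enorm_sub]
        exact le_opENorm _ _
    _ = (∫⁻ t in Ioc (0 : ℝ) 1, ‖fderiv ℝ F (lineMap x y t)‖ₑ) * edist x y := by
        rw [lintegral_mul_const' _ _ (edist_ne_top x y), restrict_Ioc_eq_restrict_Icc]

variable [FiniteDimensional ℝ E] [MeasurableSpace E] [BorelSpace E] {μ : Measure E}
  [μ.IsAddHaarMeasure] {B : Set E} {p : ℝ}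

lemma lintegral_comp_homothety (x : E) {t : ℝ} (ht : 0 < t) {h : E → ℝ≥0∞} (hh : Measurable h) :
    ∫⁻ w, h (homothety x t w) ∂μ = ENNReal.ofReal (t ^ finrank ℝ E)⁻¹ * ∫⁻ w, h w ∂μ := by
  have hmap : Measure.map (homothety x t) μ = ENNReal.ofReal (t ^ finrank ℝ E)⁻¹ • μ := by
    have hcomp : (homothety x t : E → E) = (· + x) ∘ (t • ·) ∘ (· - x) := by
      ext w
      simp [homothety_apply]
    rw [hcomp, ← Measure.map_map (by fun_prop) (by fun_prop),
      ← Measure.map_map (by fun_prop) (by fun_prop), map_sub_right_eq_self,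
      Measure.map_addHaar_smul μ ht.ne', Measure.map_smul, map_add_right_eq_self,
      abs_of_pos (by positivity)]
  rw [← lintegral_map hh (homothety_continuous x t).measurable, hmap, lintegral_smul_measure,
    smul_eq_mul]

lemma setLAverage_comp_lineMap_le {x : E} (hB : StarConvex ℝ x B) (hBm : MeasurableSet B)
    {t : ℝ} (ht : t ∈ Ioc (0 : ℝ) 1) {h : E → ℝ≥0∞} (hh : Measurable h) :
    ⨍⁻ w in B, h (lineMap x w t) ∂μ ≤
      ENNReal.ofReal (t ^ finrank ℝ E)⁻¹ * ⨍⁻ w in B, h w ∂μ := by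
  have hmaps : MapsTo (homothety x t) B B := fun w hw ↦ by
    simpa [homothety_eq_lineMap, lineMap_apply, add_comm] using hB.add_smul_sub_mem hw ht.1.le ht.2
  have key : ∫⁻ w in B, h (lineMap x w t) ∂μ ≤
      ENNReal.ofReal (t ^ finrank ℝ E)⁻¹ * ∫⁻ w in B, h w ∂μ := by
    rw [← lintegral_indicator hBm, ← lintegral_indicator hBm,
      ← lintegral_comp_homothety x ht.1 (hh.indicator hBm)]
    refine lintegral_mono fun w ↦ indicator_apply_le' (fun hw ↦ ?_) fun _ ↦ zero_le
    rw [indicator_of_mem (hmaps hw), homothety_eq_lineMap]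
  rw [setLAverage_eq, setLAverage_eq, ← mul_div_assoc]
  gcongr

lemma setLAverage_enorm_comp_lineMap_le {W : Type*} [NormedAddCommGroup W] {G : E → W}
    (hG : Continuous G) {x : E} (hB : StarConvex ℝ x B) (hBm : MeasurableSet B) (hB0 : μ B ≠ 0)
    (hBtop : μ B ≠ ⊤) (hp : 1 ≤ p) {t : ℝ} (ht : t ∈ Ioc (0 : ℝ) 1) :
    ⨍⁻ w in B, ‖G (lineMap x w t)‖ₑ ∂μ ≤
      ENNReal.ofReal (t ^ (-(finrank ℝ E / p))) * (⨍⁻ w in B, ‖G w‖ₑ ^ p ∂μ) ^ (1 / p) := by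
  have : IsFiniteMeasure (μ.restrict B) := ⟨by simpa using hBtop.lt_top⟩
  have : NeZero (μ.restrict B) := ⟨by simpa using hB0⟩
  have hline : Continuous fun w ↦ lineMap x w t := by
    simp only [lineMap_apply_module]
    fun_prop
  calc ⨍⁻ w in B, ‖G (lineMap x w t)‖ₑ ∂μ
      ≤ (⨍⁻ w in B, ‖G (lineMap x w t)‖ₑ ^ p ∂μ) ^ (1 / p) :=
        laverage_enorm_le_laverage_enorm_rpow (hG.comp hline).aestronglyMeasurable hp
    _ ≤ (ENNReal.ofReal (t ^ finrank ℝ E)⁻¹ * ⨍⁻ w in B, ‖G w‖ₑ ^ p ∂μ) ^ (1 / p) := by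
        gcongr
        exact setLAverage_comp_lineMap_le hB hBm ht (hG.enorm.measurable.pow_const p)
    _ = _ := by
        rw [ENNReal.mul_rpow_of_nonneg _ _ (by positivity),
          ENNReal.ofReal_rpow_of_nonneg (inv_nonneg.2 (pow_nonneg ht.1.le _)) (by positivity),
          ← Real.rpow_natCast, ← Real.rpow_neg ht.1.le, ← Real.rpow_mul ht.1.le, neg_mul,
          mul_one_div]

lemma setLAverage_edist_le (hF : ContDiff ℝ 1 F) (hB : Convex ℝ B) (hBm : MeasurableSet B)
    (hB0 : μ B ≠ 0) (hBtop : μ B ≠ ⊤) (hp : 1 ≤ p) (hdp : finrank ℝ E < p) {x : E} (hx : x ∈ B) :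
    ⨍⁻ w in B, edist (F x) (F w) ∂μ ≤
      ENNReal.ofReal (1 - finrank ℝ E / p)⁻¹ * ediam B *
        (⨍⁻ w in B, ‖fderiv ℝ F w‖ₑ ^ p ∂μ) ^ (1 / p) := by
  have : IsFiniteMeasure (μ.restrict B) := ⟨by simpa using hBtop.lt_top⟩
  have : NeZero (μ.restrict B) := ⟨by simpa using hB0⟩
  have hp0 : 0 < p := by linarith
  have hline : Continuous fun q : E × ℝ ↦ fderiv ℝ F (lineMap x q.1 q.2) := by
    simp only [lineMap_apply_module]
    exact (hF.continuous_fderiv one_ne_zero).comp (by fun_prop)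
  calc ⨍⁻ w in B, edist (F x) (F w) ∂μ
      ≤ ⨍⁻ w in B, (∫⁻ t in Ioc (0 : ℝ) 1, ‖fderiv ℝ F (lineMap x w t)‖ₑ) * ediam B ∂μ := by
        simp_rw [setLAverage_eq]
        gcongr ?_ / _
        refine setLIntegral_mono' hBm fun w hw ↦
          (edist_le_lintegral_enorm_fderiv_lineMap hF x w).trans ?_
        gcongr
        exact edist_le_ediam_of_mem hx hw
    _ = (∫⁻ t in Ioc (0 : ℝ) 1, ⨍⁻ w in B, ‖fderiv ℝ F (lineMap x w t)‖ₑ ∂μ) * ediam B := by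
        rw [laverage, lintegral_mul_const _ hline.enorm.measurable.lintegral_prod_right',
          lintegral_lintegral_swap hline.enorm.measurable.aemeasurable]
        rfl
    _ ≤ (∫⁻ t in Ioc (0 : ℝ) 1, ENNReal.ofReal (t ^ (-(finrank ℝ E / p))) *
          (⨍⁻ w in B, ‖fderiv ℝ F w‖ₑ ^ p ∂μ) ^ (1 / p)) * ediam B := by
        gcongr ?_ * _
        exact setLIntegral_mono' measurableSet_Ioc fun t ht ↦
          setLAverage_enorm_comp_lineMap_le (hF.continuous_fderiv one_ne_zero) (hB.starConvex hx)
            hBm hB0 hBtop hp ht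
    _ = _ := by
        rw [lintegral_mul_const _ (by fun_prop),
          lintegral_Ioc_rpow_neg ((div_lt_one hp0).2 hdp), mul_right_comm]

lemma edist_le_setLAverage_enorm_fderiv (hF : ContDiff ℝ 1 F) (hB : Convex ℝ B)
    (hBm : MeasurableSet B) (hB0 : μ B ≠ 0) (hBtop : μ B ≠ ⊤) (hp : 1 ≤ p)
    (hdp : finrank ℝ E < p) {x y : E} (hx : x ∈ B) (hy : y ∈ B) :
    edist (F x) (F y) ≤ 2 * (ENNReal.ofReal (1 - finrank ℝ E / p)⁻¹ * ediam B *
        (⨍⁻ w in B, ‖fderiv ℝ F w‖ₑ ^ p ∂μ) ^ (1 / p)) := by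
  have : IsFiniteMeasure (μ.restrict B) := ⟨by simpa using hBtop.lt_top⟩
  have : NeZero (μ.restrict B) := ⟨by simpa using hB0⟩
  calc edist (F x) (F y) = ⨍⁻ _ in B, edist (F x) (F y) ∂μ := (setLAverage_const hB0 hBtop _).symm
    _ ≤ ⨍⁻ w in B, (edist (F x) (F w) + edist (F y) (F w)) ∂μ :=
        lintegral_mono fun w ↦ edist_triangle_right _ _ _
    _ = ⨍⁻ w in B, edist (F x) (F w) ∂μ + ⨍⁻ w in B, edist (F y) (F w) ∂μ :=
        lintegral_add_left (continuous_const.edist hF.continuous).measurable _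
    _ ≤ _ := by
        rw [two_mul]
        exact add_le_add (setLAverage_edist_le hF hB hBm hB0 hBtop hp hdp hx)
          (setLAverage_edist_le hF hB hBm hB0 hBtop hp hdp hy)

end Morrey

section WeakDerivative

variable {E V : Type*} [NormedAddCommGroup E] [NormedSpace ℝ E] [MeasurableSpace E]
  [NormedAddCommGroup V] [NormedSpace ℝ V] {f : E → V} {g : E → E →L[ℝ] V} {μ : Measure E}

/-- `g` is the weak derivative of `f` with respect to `μ`: integration by parts holds against all
smooth compactly supported test functions, in every direction. It is meant for locally integrable
`f` and `g`, since integrals of non-integrable functions are `0`. -/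
def HasWeakFDeriv (f : E → V) (g : E → E →L[ℝ] V) (μ : Measure E) : Prop :=
  ∀ φ : E → ℝ, ContDiff ℝ (⊤ : ℕ∞) φ → HasCompactSupport φ → ∀ v : E,
    ∫ x, fderiv ℝ φ x v • f x ∂μ = -∫ x, φ x • g x v ∂μ

variable [BorelSpace E]

lemma HasWeakFDeriv.of_span_eq_top {s : Set E} (hs : Submodule.span ℝ s = ⊤)
    (hf : LocallyIntegrable f μ) (hg : LocallyIntegrable g μ)
    (h : ∀ φ : E → ℝ, ContDiff ℝ (⊤ : ℕ∞) φ → HasCompactSupport φ → ∀ v ∈ s,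
      ∫ x, fderiv ℝ φ x v • f x ∂μ = -∫ x, φ x • g x v ∂μ) :
    HasWeakFDeriv f g μ := by
  intro φ hφ hφc v
  have hfint (v : E) : Integrable (fun x ↦ fderiv ℝ φ x v • f x) μ :=
    hf.integrable_smul_left_of_hasCompactSupport
      ((hφ.continuous_fderiv (by simp)).clm_apply continuous_const) (hφc.fderiv_apply ℝ v)
  have hgint (v : E) : Integrable (fun x ↦ φ x • g x v) μ :=
    (hg.integrable_smul_left_of_hasCompactSupport hφ.continuous hφc).apply_continuousLinearMap v
  induction (hs ▸ Submodule.mem_top : v ∈ Submodule.span ℝ s) using Submodule.span_induction with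
  | mem v hv => exact h φ hφ hφc v hv
  | zero => simp
  | add v w _ _ hv hw =>
    simp only [map_add, add_smul, smul_add]
    rw [integral_add (hfint v) (hfint w), integral_add (hgint v) (hgint w), hv, hw, neg_add]
  | smul c v _ hv =>
    simp only [map_smul, smul_assoc, smul_comm _ c]
    rw [integral_smul, integral_smul, hv, smul_neg]

variable [FiniteDimensional ℝ E] [μ.IsAddHaarMeasure]

lemma HasWeakFDeriv.fderiv_convolution (h : HasWeakFDeriv f g μ)
    (hf : LocallyIntegrable f μ) (hg : LocallyIntegrable g μ) {φ : E → ℝ}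
    (hφ : ContDiff ℝ (⊤ : ℕ∞) φ) (hφc : HasCompactSupport φ) (x : E) :
    fderiv ℝ (φ ⋆[lsmul ℝ ℝ, μ] f) x = (φ ⋆[lsmul ℝ ℝ, μ] g) x := by
  have hφ1 : ContDiff ℝ 1 φ := hφ.of_le (mod_cast le_top)
  have hψ : ContDiff ℝ (⊤ : ℕ∞) (fun t ↦ φ (x - t)) := hφ.comp (by fun_prop)
  have hψc : HasCompactSupport (fun t ↦ φ (x - t)) := hφc.comp_homeomorph (Homeomorph.subLeft x)
  have hψderiv (t v : E) : fderiv ℝ (fun t ↦ φ (x - t)) t v = -fderiv ℝ φ (x - t) v := by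
    have := ((hφ1.differentiable one_ne_zero (x - t)).hasFDerivAt.comp t
      ((hasFDerivAt_id t).const_sub x)).fderiv
    simp [← Function.comp_def, this]
  have hint : ConvolutionExistsAt (fderiv ℝ φ) f x ((lsmul ℝ ℝ).precompL E) μ :=
    (hφc.fderiv ℝ).convolutionExists_left _ (hφ1.continuous_fderiv one_ne_zero) hf x
  have hgint : ConvolutionExistsAt φ g x (lsmul ℝ ℝ) μ :=
    hφc.convolutionExists_left _ hφ.continuous hg x
  ext v
  calc fderiv ℝ (φ ⋆[lsmul ℝ ℝ, μ] f) x v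
      = ∫ t, fderiv ℝ φ t v • f (x - t) ∂μ := by
        rw [(hφc.hasFDerivAt_convolution_left _ hφ1 hf x).fderiv, convolution_def,
          ContinuousLinearMap.integral_apply hint]
        rfl
    _ = ∫ t, fderiv ℝ φ (x - t) v • f t ∂μ := by
        simpa using (integral_sub_left_eq_self (fun t ↦ fderiv ℝ φ (x - t) v • f t) μ x)
    _ = ∫ t, φ (x - t) • g t v ∂μ := by
        simpa [hψderiv, integral_neg] using h _ hψ hψc v
    _ = ∫ t, φ t • g (x - t) v ∂μ := by
        simpa using (integral_sub_left_eq_self (fun t ↦ φ (x - t) • g t v) μ x).symm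
    _ = (φ ⋆[lsmul ℝ ℝ, μ] g) x v := by
        rw [convolution_def, ContinuousLinearMap.integral_apply hgint]
        rfl

end WeakDerivative

lemma setLIntegral_comp_sub_le {G : Type*} [SeminormedAddCommGroup G] [MeasurableSpace G]
    [BorelSpace G] {μ : Measure G} [μ.IsAddRightInvariant] (h : G → ℝ≥0∞) {A : Set G}
    (hA : MeasurableSet A) {s : G} {δ : ℝ} (hs : ‖s‖ ≤ δ) :
    ∫⁻ x in A, h (x - s) ∂μ ≤ ∫⁻ x in cthickening δ A, h x ∂μ := by
  rw [← lintegral_indicator hA, ← lintegral_indicator isClosed_cthickening.measurableSet,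
    ← lintegral_sub_right_eq_self ((cthickening δ A).indicator h) s]
  refine lintegral_mono fun x ↦ indicator_apply_le' (fun hx ↦ ?_) fun _ ↦ zero_le
  rw [indicator_of_mem (mem_cthickening_of_dist_le _ x _ _ hx (by simpa using hs))]

section Mollification

variable {E W : Type*} [NormedAddCommGroup E] [NormedSpace ℝ E] [MeasurableSpace E]
  [NormedAddCommGroup W] [NormedSpace ℝ W] {g : E → W} {μ : Measure E}
  [BorelSpace E] [FiniteDimensional ℝ E] [μ.IsAddHaarMeasure] {p : ℝ}

lemma lintegral_enorm_normed (φ : ContDiffBump (0 : E)) : ∫⁻ s, ‖φ.normed μ s‖ₑ ∂μ = 1 := by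
  rw [← ofReal_integral_norm_eq_lintegral_enorm φ.integrable_normed]
  simp only [Real.norm_of_nonneg (φ.nonneg_normed _), φ.integral_normed, ENNReal.ofReal_one]

lemma enorm_normed_convolution_rpow_le (φ : ContDiffBump (0 : E)) (hg : AEStronglyMeasurable g μ)
    (hp : 1 ≤ p) (x : E) :
    ‖(φ.normed μ ⋆[lsmul ℝ ℝ, μ] g) x‖ₑ ^ p ≤ ∫⁻ s, ‖φ.normed μ s‖ₑ * ‖g (x - s)‖ₑ ^ p ∂μ := by
  let P := μ.withDensity fun s ↦ ‖φ.normed μ s‖ₑ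
  have hφm : Measurable fun s ↦ ‖φ.normed μ s‖ₑ := φ.continuous_normed.enorm.measurable
  have : IsProbabilityMeasure P := ⟨by simp [P, lintegral_enorm_normed φ]⟩
  have hP (h : E → ℝ≥0∞) : ∫⁻ s, h s ∂P = ∫⁻ s, ‖φ.normed μ s‖ₑ * h s ∂μ :=
    lintegral_withDensity_eq_lintegral_mul_non_measurable _ hφm (by simp) _
  have hgx : AEStronglyMeasurable (fun s ↦ g (x - s)) P :=
    (hg.comp_quasiMeasurePreserving
      (quasiMeasurePreserving_sub_left_of_right_invariant μ x)).mono_ac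
        (withDensity_absolutelyContinuous _ _)
  rw [← ENNReal.le_rpow_inv_iff (by linarith), ← one_div]
  calc ‖(φ.normed μ ⋆[lsmul ℝ ℝ, μ] g) x‖ₑ
      ≤ ∫⁻ s, ‖φ.normed μ s • g (x - s)‖ₑ ∂μ := enorm_integral_le_lintegral_enorm _
    _ = ∫⁻ s, ‖g (x - s)‖ₑ ∂P := by simp only [hP, enorm_smul]
    _ ≤ (∫⁻ s, ‖g (x - s)‖ₑ ^ p ∂P) ^ (1 / p) := lintegral_enorm_le_lintegral_enorm_rpow hgx hp
    _ = _ := by rw [hP]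

lemma setLIntegral_enorm_normed_convolution_rpow_le (φ : ContDiffBump (0 : E))
    (hg : AEStronglyMeasurable g μ) (hp : 1 ≤ p) {A : Set E} (hA : MeasurableSet A) :
    ∫⁻ x in A, ‖(φ.normed μ ⋆[lsmul ℝ ℝ, μ] g) x‖ₑ ^ p ∂μ ≤
      ∫⁻ x in cthickening φ.rOut A, ‖g x‖ₑ ^ p ∂μ := by
  have hφm : Measurable fun s ↦ ‖φ.normed μ s‖ₑ := φ.continuous_normed.enorm.measurable
  have hgm : AEMeasurable (fun q : E × E ↦ ‖g (q.1 - q.2)‖ₑ ^ p) (μ.prod μ) :=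
    ((hg.comp_quasiMeasurePreserving
      (quasiMeasurePreserving_sub_of_right_invariant μ μ)).enorm).pow_const p
  calc ∫⁻ x in A, ‖(φ.normed μ ⋆[lsmul ℝ ℝ, μ] g) x‖ₑ ^ p ∂μ
      ≤ ∫⁻ x in A, ∫⁻ s, ‖φ.normed μ s‖ₑ * ‖g (x - s)‖ₑ ^ p ∂μ ∂μ :=
        lintegral_mono fun x ↦ enorm_normed_convolution_rpow_le φ hg hp x
    _ = ∫⁻ s, ‖φ.normed μ s‖ₑ * ∫⁻ x in A, ‖g (x - s)‖ₑ ^ p ∂μ ∂μ := by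
        rw [lintegral_lintegral_swap]
        · simp_rw [lintegral_const_mul' _ _ enorm_ne_top]
        · exact (hφm.comp measurable_snd).aemeasurable.mul
            (hgm.mono_measure (Measure.prod_mono Measure.restrict_le_self le_rfl))
    _ ≤ ∫⁻ s, ‖φ.normed μ s‖ₑ * ∫⁻ x in cthickening φ.rOut A, ‖g x‖ₑ ^ p ∂μ ∂μ := by
        refine lintegral_mono fun s ↦ ?_
        by_cases hs : φ.normed μ s = 0
        · simp [hs]
        have hs' : s ∈ ball 0 φ.rOut := φ.support_normed_eq (μ := μ) ▸ hs
        gcongr _ * ?_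
        exact setLIntegral_comp_sub_le _ hA (mem_ball_zero_iff.1 hs').le
    _ = ∫⁻ x in cthickening φ.rOut A, ‖g x‖ₑ ^ p ∂μ := by
        rw [lintegral_mul_const _ hφm, lintegral_enorm_normed (μ := μ) φ, one_mul]

end Mollification

section Energy

variable {E W : Type*} [MeasurableSpace E] [NormedAddCommGroup W] {g : E → W} {μ : Measure E}
  {p : ℝ}

/-- The `p`-energy measure `‖g‖ ^ p ∂μ`; applied to a weak derivative `g`, it is the energy
distribution of a Sobolev map. -/
noncomputable def energyMeasure (g : E → W) (p : ℝ) (μ : Measure E) : Measure E :=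
  μ.withDensity fun x ↦ ‖g x‖ₑ ^ p

lemma isFiniteMeasure_energyMeasure (hg : MemLp g (ENNReal.ofReal p) μ) (hp : 0 < p) :
    IsFiniteMeasure (energyMeasure g p μ) := by
  have h := lintegral_rpow_enorm_lt_top_of_eLpNorm_lt_top (by simpa using hp)
    ENNReal.ofReal_ne_top hg.eLpNorm_lt_top
  rw [ENNReal.toReal_ofReal hp.le] at h
  exact isFiniteMeasure_withDensity h.ne

end Energy

section MorreySobolev

variable {E V : Type*} [NormedAddCommGroup E] [NormedSpace ℝ E] [MeasurableSpace E] [BorelSpace E]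
  [FiniteDimensional ℝ E] [NormedAddCommGroup V] [NormedSpace ℝ V]
  {f : E → V} {g : E → E →L[ℝ] V} {μ : Measure E} [μ.IsAddHaarMeasure] {p : ℝ}

lemma HasWeakFDeriv.edist_normed_convolution_le (h : HasWeakFDeriv f g μ) (hf : Continuous f)
    (hg : MemLp g (ENNReal.ofReal p) μ) (hp : 1 ≤ p) (hdp : finrank ℝ E < p) {B : Set E}
    (hB : Convex ℝ B) (hBm : MeasurableSet B) (hB0 : μ B ≠ 0) (hBtop : μ B ≠ ⊤) {x y : E}
    (hx : x ∈ B) (hy : y ∈ B) (φ : ContDiffBump (0 : E)) :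
    edist ((φ.normed μ ⋆[lsmul ℝ ℝ, μ] f) x) ((φ.normed μ ⋆[lsmul ℝ ℝ, μ] f) y) ≤
      2 * (ENNReal.ofReal (1 - finrank ℝ E / p)⁻¹ * ediam B *
        (energyMeasure g p μ (cthickening φ.rOut B) / μ B) ^ (1 / p)) := by
  have hgloc : LocallyIntegrable g μ := hg.locallyIntegrable (ENNReal.one_le_ofReal.2 hp)
  have hsmooth : ContDiff ℝ 1 (φ.normed μ ⋆[lsmul ℝ ℝ, μ] f) :=
    φ.hasCompactSupport_normed.contDiff_convolution_left _ φ.contDiff_normed hf.locallyIntegrable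
  refine (edist_le_setLAverage_enorm_fderiv hsmooth hB hBm hB0 hBtop hp hdp hx hy).trans ?_
  gcongr
  rw [setLAverage_eq, energyMeasure, withDensity_apply _ isClosed_cthickening.measurableSet]
  gcongr ?_ / _
  simp_rw [h.fderiv_convolution hf.locallyIntegrable hgloc φ.contDiff_normed
    φ.hasCompactSupport_normed]
  exact setLIntegral_enorm_normed_convolution_rpow_le φ hg.aestronglyMeasurable hp hBm

variable [CompleteSpace V]

theorem HasWeakFDeriv.ediam_image_le (h : HasWeakFDeriv f g μ) (hf : Continuous f)
    (hg : MemLp g (ENNReal.ofReal p) μ) (hp : 1 ≤ p) (hdp : finrank ℝ E < p) {B : Set E}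
    (hB : Convex ℝ B) (hBc : IsCompact B) (hB0 : μ B ≠ 0) :
    ediam (f '' B) ≤ 2 * (ENNReal.ofReal (1 - finrank ℝ E / p)⁻¹ * ediam B *
      (energyMeasure g p μ B / μ B) ^ (1 / p)) := by
  have := isFiniteMeasure_energyMeasure hg (by linarith)
  refine ediam_le ?_
  rintro _ ⟨x, hx, rfl⟩ _ ⟨y, hy, rfl⟩
  let φ (k : ℕ) : ContDiffBump (0 : E) :=
    ⟨1 / ((k : ℝ) + 1) / 2, 1 / ((k : ℝ) + 1), by positivity, half_lt_self (by positivity)⟩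
  have hφ : Tendsto (fun k ↦ (φ k).rOut) atTop (𝓝 0) := tendsto_one_div_add_atTop_nhds_zero_nat
  have henergy : Tendsto (fun k ↦ energyMeasure g p μ (cthickening (φ k).rOut B)) atTop
      (𝓝 (energyMeasure g p μ B)) :=
    (tendsto_measure_cthickening_of_isClosed ⟨1, one_pos, measure_ne_top _ _⟩
      hBc.isClosed).comp hφ
  refine le_of_tendsto_of_tendsto'
    ((ContDiffBump.convolution_tendsto_right_of_continuous (μ := μ) hφ hf x).edist
      (ContDiffBump.convolution_tendsto_right_of_continuous (μ := μ) hφ hf y)) ?_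
    fun k ↦ h.edist_normed_convolution_le hf hg hp hdp hB hBc.measurableSet hB0
      hBc.measure_lt_top.ne hx hy (φ k)
  refine ENNReal.Tendsto.const_mul (ENNReal.Tendsto.const_mul ?_ ?_) (by simp)
  · exact (ENNReal.continuous_rpow_const.tendsto _).comp
      (ENNReal.Tendsto.div_const henergy (.inr hB0))
  · exact .inr (ENNReal.mul_ne_top ENNReal.ofReal_ne_top hBc.isBounded.ediam_ne_top)

lemma ediam_closedBall_le {Y : Type*} [PseudoMetricSpace Y] (y : Y) {r : ℝ} (hr : 0 ≤ r) :
    ediam (closedBall y r) ≤ 2 * ENNReal.ofReal r := by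
  rw [← closedEBall_ofReal hr]
  exact ediam_closedEBall_le

/-- The Morrey estimate with constant `K`, exponent `p` and dimension `d`: the `p`-th power of the
oscillation of `f` on a ball of radius `r` is controlled by `r ^ (p - d)` times the energy `G` of
that ball. -/
def MorreyEstimate {E Y : Type*} [PseudoMetricSpace E] [MeasurableSpace E] [PseudoEMetricSpace Y]
    (f : E → Y) (G : Measure E) (K : ℝ≥0) (p d : ℝ) : Prop :=
  ∀ (z : E) {r : ℝ}, 0 < r → ediam (f '' closedBall z r) ^ p ≤
    K * ENNReal.ofReal (r ^ (p - d)) * G (closedBall z r)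

theorem HasWeakFDeriv.exists_morreyEstimate (h : HasWeakFDeriv f g μ) (hf : Continuous f)
    (hg : MemLp g (ENNReal.ofReal p) μ) (hp : 1 ≤ p) (hdp : finrank ℝ E < p) :
    ∃ K : ℝ≥0, MorreyEstimate f (energyMeasure g p μ) K p (finrank ℝ E) := by
  set A := ENNReal.ofReal (1 - finrank ℝ E / p)⁻¹
  set b := μ (closedBall 0 1)
  have hp0 : 0 < p := by linarith
  have hb : b ≠ 0 := (measure_closedBall_pos μ 0 one_pos).ne'
  have hbtop : b ≠ ⊤ := measure_closedBall_lt_top.ne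
  have hK : (4 * A) ^ p / b ≠ ⊤ := by finiteness
  refine ⟨((4 * A) ^ p / b).toNNReal, fun z r hr ↦ ?_⟩
  have hrd : 0 < r ^ finrank ℝ E := by positivity
  have hball : μ (closedBall z r) = ENNReal.ofReal (r ^ finrank ℝ E) * b :=
    Measure.addHaar_closedBall' μ z hr.le
  calc ediam (f '' closedBall z r) ^ p
      ≤ (2 * (A * (2 * ENNReal.ofReal r) *
          (energyMeasure g p μ (closedBall z r) / μ (closedBall z r)) ^ (1 / p))) ^ p := by
        gcongr
        refine (h.ediam_image_le hf hg hp hdp (convex_closedBall z r) (isCompact_closedBall z r)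
          (measure_closedBall_pos μ z hr).ne').trans ?_
        gcongr
        exact ediam_closedBall_le z hr.le
    _ = (4 * A) ^ p * ENNReal.ofReal r ^ p *
          (energyMeasure g p μ (closedBall z r) / (ENNReal.ofReal (r ^ finrank ℝ E) * b)) := by
        rw [hball, ← mul_assoc, ENNReal.mul_rpow_of_nonneg _ _ hp0.le,
          one_div, ENNReal.rpow_inv_rpow hp0.ne', ← ENNReal.mul_rpow_of_nonneg _ _ hp0.le]
        ring_nf
    _ = _ := by
        rw [ENNReal.coe_toNNReal hK, Real.rpow_sub hr, Real.rpow_natCast,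
          ENNReal.ofReal_div_of_pos hrd, ENNReal.ofReal_rpow_of_pos hr]
        simp only [div_eq_mul_inv]
        rw [ENNReal.mul_inv (.inr hbtop) (.inr hb)]
        ring

end MorreySobolev

section Density

variable {X : Type*} [MetricSpace X] [SecondCountableTopology X] [MeasurableSpace X] [BorelSpace X]
  [HasBesicovitchCovering X] {ν : Measure X} [IsFiniteMeasure ν] {β : ℝ}

lemma exists_closedBall_covering_tsum_rpow_le {K : ℝ≥0} {A : Set X}
    (hA : ∀ a ∈ A, ∃ᶠ r : ℝ in 𝓝[>] 0, ENNReal.ofReal r ^ β ≤ K * ν (closedBall a r)) {ε : ℝ}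
    (hε : 0 < ε) :
    ∃ (t : Set X) (r : X → ℝ), t.Countable ∧ (∀ a ∈ t, r a ∈ Ioo 0 ε) ∧
      A ⊆ ⋃ a : t, closedBall (a : X) (r a) ∧
      ∑' a : t, ENNReal.ofReal (r a) ^ β ≤ K * (ν A + ENNReal.ofReal ε) := by
  obtain ⟨t, r, ht, -, hr, hcov, hsum⟩ := Besicovitch.exists_closedBall_covering_tsum_measure_le
    ν (ENNReal.ofReal_pos.2 hε).ne'
    (fun a ↦ {r | r ∈ Ioo 0 ε ∧ ENNReal.ofReal r ^ β ≤ K * ν (closedBall a r)}) A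
    fun a ha δ hδ ↦ by
      obtain ⟨r, hr, hrmin⟩ := ((hA a ha).and_eventually
        (Ioo_mem_nhdsGT (lt_min hε hδ))).exists
      exact ⟨r, ⟨⟨hrmin.1, hrmin.2.trans_le (min_le_left _ _)⟩, hr⟩,
        hrmin.1, hrmin.2.trans_le (min_le_right _ _)⟩
  refine ⟨t, r, ht, fun a ha ↦ (hr a ha).1, hcov.trans (biUnion_eq_iUnion _ _).subset, ?_⟩
  calc ∑' a : t, ENNReal.ofReal (r a) ^ β
      ≤ ∑' a : t, K * ν (closedBall (a : X) (r a)) :=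
        ENNReal.tsum_le_tsum fun a ↦ (hr a a.2).2
    _ ≤ K * (ν A + ENNReal.ofReal ε) := by
        rw [ENNReal.tsum_mul_left]
        gcongr

lemma hausdorffMeasure_le_of_frequently_rpow_le (hβ : 0 ≤ β) {K : ℝ≥0} {A : Set X}
    (hA : ∀ a ∈ A, ∃ᶠ r : ℝ in 𝓝[>] 0, ENNReal.ofReal r ^ β ≤ K * ν (closedBall a r)) :
    μH[β] A ≤ 2 ^ β * K * ν A := by
  let ε (k : ℕ) : ℝ := 1 / ((k : ℝ) + 1)
  have hε0 : Tendsto (fun k ↦ ENNReal.ofReal (ε k)) atTop (𝓝 0) := by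
    simpa [ε] using ENNReal.tendsto_ofReal (tendsto_one_div_add_atTop_nhds_zero_nat (𝕜 := ℝ))
  choose t r ht hr hcov hsum using fun k ↦
    exists_closedBall_covering_tsum_rpow_le hA (ε := ε k) (by positivity)
  have (k : ℕ) : Countable (t k) := ht k
  have hdiam (k : ℕ) (a : t k) :
      ediam (closedBall (a : X) (r k a)) ≤ 2 * ENNReal.ofReal (r k a) :=
    ediam_closedBall_le _ (hr k a a.2).1.le
  calc μH[β] A
      ≤ liminf (fun k ↦ ∑' a : t k, ediam (closedBall (a : X) (r k a)) ^ β) atTop := by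
        refine Measure.hausdorffMeasure_le_liminf_tsum (ι := fun k ↦ t k) β A
          (fun k ↦ 2 * ENNReal.ofReal (ε k)) ?_ _ (.of_forall fun k a ↦ (hdiam k a).trans ?_)
          (.of_forall hcov)
        · simpa using ENNReal.Tendsto.const_mul hε0 (.inr ENNReal.ofNat_ne_top)
        · gcongr
          exact (hr k a a.2).2.le
    _ ≤ liminf (fun k ↦ 2 ^ β * K * (ν A + ENNReal.ofReal (ε k))) atTop := by
        refine liminf_le_liminf (.of_forall fun k ↦ ?_)
        calc ∑' a : t k, ediam (closedBall (a : X) (r k a)) ^ β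
            ≤ ∑' a : t k, 2 ^ β * ENNReal.ofReal (r k a) ^ β := by
              gcongr with a
              grw [hdiam k a, ENNReal.mul_rpow_of_nonneg _ _ hβ]
          _ ≤ 2 ^ β * K * (ν A + ENNReal.ofReal (ε k)) := by
              grw [ENNReal.tsum_mul_left, hsum k, mul_assoc]
    _ = 2 ^ β * K * ν A := by
        refine Tendsto.liminf_eq ?_
        simpa using ENNReal.Tendsto.const_mul (hε0.const_add (ν A))
          (.inr (by finiteness : (2 : ℝ≥0∞) ^ β * K ≠ ⊤))

lemma hausdorffMeasure_setOf_frequently_rpow_le {d : ℝ} (hβ : 0 ≤ β) (hβd : β < d)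
    (hν : ν ≪ μH[d]) (K : ℝ≥0) :
    μH[β] {a | ∃ᶠ r : ℝ in 𝓝[>] 0, ENNReal.ofReal r ^ β ≤ K * ν (closedBall a r)} = 0 := by
  set A := {a | ∃ᶠ r : ℝ in 𝓝[>] 0, ENNReal.ofReal r ^ β ≤ K * ν (closedBall a r)}
  have hle : μH[β] A ≤ 2 ^ β * K * ν A :=
    hausdorffMeasure_le_of_frequently_rpow_le hβ fun _ ha ↦ ha
  have hfin : μH[β] A ≠ ⊤ := ne_top_of_le_ne_top (by finiteness) hle
  have hνA : ν A = 0 := hν ((Measure.hausdorffMeasure_zero_or_top hβd A).resolve_right hfin)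
  simpa [hνA] using hle

theorem ae_tendsto_measure_closedBall_div_rpow {d : ℝ} (hβ : 0 ≤ β) (hβd : β < d)
    (hν : ν ≪ μH[d]) :
    ∀ᵐ a ∂μH[β], Tendsto (fun r ↦ ν (closedBall a r) / ENNReal.ofReal r ^ β) (𝓝[>] 0) (𝓝 0) := by
  have hae : ∀ᵐ a ∂μH[β], ∀ K : ℕ,
      ¬∃ᶠ r : ℝ in 𝓝[>] 0, ENNReal.ofReal r ^ β ≤ (K : ℝ≥0) * ν (closedBall a r) :=
    ae_all_iff.2 fun K ↦ by
      simpa [ae_iff] using hausdorffMeasure_setOf_frequently_rpow_le hβ hβd hν (K : ℝ≥0)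
  filter_upwards [hae] with a ha
  refine ENNReal.tendsto_nhds_zero.2 fun ε hε ↦ ?_
  obtain ⟨K, hK⟩ := ENNReal.exists_inv_nat_lt hε.ne'
  have hK0 : (K : ℝ≥0∞) ≠ 0 := fun h ↦ by simp [h] at hK
  filter_upwards [not_frequently.1 (ha K)] with r hr
  refine ENNReal.div_le_of_le_mul ?_
  calc ν (closedBall a r) ≤ (K : ℝ≥0∞)⁻¹ * ENNReal.ofReal r ^ β := by
        rw [mul_comm, ← div_eq_mul_inv]
        refine (ENNReal.le_div_iff_mul_le (.inl hK0) (.inl (ENNReal.natCast_ne_top K))).2 ?_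
        simpa [mul_comm] using (not_le.1 hr).le
    _ ≤ ε * ENNReal.ofReal r ^ β := by gcongr

end Density

section Lines

lemma rpow_sum_rpow_le_of_card_mul_le_one {ι : Type*} [Fintype ι] {x m : ι → ℝ≥0∞} {K : ℝ≥0}
    {α p d r : ℝ} (hα : 0 < α) (hαp : α ≤ p) (hr : 0 < r) (hcard : Fintype.card ι * r ≤ 1)
    (hx : ∀ i, x i ^ p ≤ K * ENNReal.ofReal (r ^ (p - d)) * m i) :
    (∑ i, x i ^ α) ^ (p / α) ≤
      K * ((∑ i, m i) / ENNReal.ofReal r ^ (d - 1 - p * (1 - 1 / α))) := by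
  have hq : 1 ≤ p / α := (one_le_div hα).2 hαp
  have hcard' : (Fintype.card ι : ℝ≥0∞) ≤ ENNReal.ofReal r⁻¹ := by
    rw [← ENNReal.ofReal_natCast]
    exact ENNReal.ofReal_le_ofReal ((le_div_iff₀ hr).2 hcard |>.trans_eq (one_div r))
  calc (∑ i, x i ^ α) ^ (p / α)
      ≤ Fintype.card ι ^ (p / α - 1) * ∑ i, (x i ^ α) ^ (p / α) :=
        ENNReal.rpow_sum_le_const_mul_sum_rpow Finset.univ _ hq
    _ ≤ ENNReal.ofReal r⁻¹ ^ (p / α - 1) * ∑ i, K * ENNReal.ofReal (r ^ (p - d)) * m i := by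
        gcongr with i
        rw [← ENNReal.rpow_mul, mul_div_cancel₀ p hα.ne']
        exact hx i
    _ = K * (ENNReal.ofReal (r⁻¹ ^ (p / α - 1) * r ^ (p - d)) * ∑ i, m i) := by
        rw [← Finset.mul_sum, ENNReal.ofReal_rpow_of_pos (inv_pos.2 hr),
          ENNReal.ofReal_mul (by positivity)]
        ring
    _ = _ := by
        rw [ENNReal.div_eq_inv_mul, ← ENNReal.rpow_neg, ENNReal.ofReal_rpow_of_pos hr,
          Real.inv_rpow hr.le, ← Real.rpow_neg hr.le, ← Real.rpow_add hr]
        congr 4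
        ring

lemma hausdorffMeasure_eq_zero_of_tendsto_sum_ediam {Y ι : Type*} [EMetricSpace Y]
    [MeasurableSpace Y] [BorelSpace Y] {l : Filter ι} [l.NeBot] {κ : ι → Type*}
    [∀ j, Fintype (κ j)] {α : ℝ} (hα : 0 < α) {s : Set Y} {t : ∀ j, κ j → Set Y}
    (hst : ∀ᶠ j in l, s ⊆ ⋃ k, t j k)
    (ht : Tendsto (fun j ↦ ∑ k, ediam (t j k) ^ α) l (𝓝 0)) :
    μH[α] s = 0 := by
  have hdiam (j : ι) (k : κ j) : ediam (t j k) ≤ (∑ k, ediam (t j k) ^ α) ^ (1 / α) := by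
    rw [one_div, ENNReal.le_rpow_inv_iff hα]
    exact Finset.single_le_sum (f := fun k ↦ ediam (t j k) ^ α) (fun _ _ ↦ zero_le)
      (Finset.mem_univ k)
  have hdiam0 : Tendsto (fun j ↦ (∑ k, ediam (t j k) ^ α) ^ (1 / α)) l (𝓝 0) := by
    simpa [hα] using ht.ennrpow_const (1 / α)
  refine nonpos_iff_eq_zero.1 ((Measure.hausdorffMeasure_le_liminf_sum α s _ hdiam0 t
    (.of_forall hdiam) hst).trans_eq ht.liminf_eq)

/-- The midpoint of the `k`-th of the `N` equal subintervals of `[0, 1]`, whose half-length is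
`(2 * N)⁻¹`. -/
noncomputable def subintervalMidpoint (N : ℕ) (k : Fin N) : ℝ := (2 * k + 1) * (2 * N : ℝ)⁻¹

lemma Ico_zero_one_subset_iUnion_closedBall {N : ℕ} (hN : N ≠ 0) :
    Ico (0 : ℝ) 1 ⊆ ⋃ k : Fin N, closedBall (subintervalMidpoint N k) (2 * N : ℝ)⁻¹ := by
  intro t ht
  have hN0 : (0 : ℝ) < N := by positivity
  have htN : 0 ≤ t * N := mul_nonneg ht.1 hN0.le
  have hlt : ⌊t * N⌋₊ < N := (Nat.floor_lt htN).2 ((mul_lt_iff_lt_one_left hN0).2 ht.2)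
  have hsub : t - (2 * ⌊t * N⌋₊ + 1) * (2 * N : ℝ)⁻¹ =
      (2 * (t * N - ⌊t * N⌋₊) - 1) * (2 * N : ℝ)⁻¹ := by
    field_simp
    ring
  refine mem_iUnion.2 ⟨⟨⌊t * N⌋₊, hlt⟩, ?_⟩
  rw [subintervalMidpoint, mem_closedBall, Real.dist_eq, hsub, abs_mul,
    abs_of_pos (by positivity : 0 < (2 * N : ℝ)⁻¹)]
  refine mul_le_of_le_one_left (by positivity) (abs_le.2 ⟨?_, ?_⟩)
  · linarith [Nat.floor_le htN]
  · linarith [Nat.lt_floor_add_one (t * N)]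

lemma pairwise_le_dist_subintervalMidpoint (N : ℕ) :
    Pairwise fun k l : Fin N ↦
      2 * (2 * N : ℝ)⁻¹ ≤ dist (subintervalMidpoint N k) (subintervalMidpoint N l) := by
  intro k l hkl
  have hsub : subintervalMidpoint N k - subintervalMidpoint N l =
      ((k : ℕ) - (l : ℕ) : ℝ) * (2 * (2 * N : ℝ)⁻¹) := by
    simp only [subintervalMidpoint]
    ring
  have hone : 1 ≤ |((k : ℕ) - (l : ℕ) : ℝ)| := Nat.pairwise_one_le_dist (Fin.val_ne_of_ne hkl)
  rw [Real.dist_eq, hsub, abs_mul, abs_of_nonneg (by positivity : 0 ≤ 2 * (2 * N : ℝ)⁻¹)]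
  exact le_mul_of_one_le_left (by positivity) hone

variable {E X Y : Type*} [NormedAddCommGroup E] [NormedSpace ℝ E] [FiniteDimensional ℝ E]
  [MeasurableSpace E] [BorelSpace E] {μ : Measure E} [μ.IsAddHaarMeasure]
  [PseudoMetricSpace X] [MeasurableSpace X] [BorelSpace X]
  [EMetricSpace Y] {G : Measure E} {P : E → X} {a : X}

lemma sum_measure_closedBall_le_map {ι : Type*} [Fintype ι] (hG : G ≪ μ) (hP : LipschitzWith 1 P)
    {z : ι → E} (hz : ∀ i, P (z i) = a) {r : ℝ} (hr : 0 < r)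
    (hsep : Pairwise fun i j ↦ 2 * r ≤ dist (z i) (z j)) :
    ∑ i, G (closedBall (z i) r) ≤ G.map P (closedBall a r) := by
  have hball (i : ι) : G (closedBall (z i) r) = G (ball (z i) r) := by
    refine measure_congr (ae_eq_set.2 ⟨?_, by simp [sdiff_eq_empty.2 ball_subset_closedBall]⟩)
    rw [closedBall_sdiff_ball]
    exact hG (Measure.addHaar_sphere_of_ne_zero μ (z i) hr.ne')
  have hdisj : Pairwise (Function.onFun Disjoint fun i ↦ ball (z i) r) := fun i j hij ↦
    ball_disjoint_ball (by linarith [hsep hij])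
  rw [Measure.map_apply hP.continuous.measurable isClosed_closedBall.measurableSet]
  calc ∑ i, G (closedBall (z i) r) = G (⋃ i, ball (z i) r) := by
        simp_rw [hball, measure_iUnion hdisj fun _ ↦ isOpen_ball.measurableSet, tsum_fintype]
    _ ≤ G (P ⁻¹' closedBall a r) := measure_mono (iUnion_subset fun i ↦ by
        have hmaps := hP.mapsTo_closedBall (z i) r
        rw [hz i, NNReal.coe_one, one_mul] at hmaps
        exact ball_subset_closedBall.trans hmaps)

variable {f : E → Y} {γ : ℝ → E} {K : ℝ≥0} {α p d : ℝ}

lemma rpow_sum_ediam_image_closedBall_le (hα : 0 < α) (hαp : α ≤ p) (hG : G ≪ μ)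
    (hf : MorreyEstimate f G K p d) (hP : LipschitzWith 1 P) (hγ : Isometry γ)
    (hPγ : ∀ t, P (γ t) = a) {N : ℕ} (hN : N ≠ 0) :
    (∑ k : Fin N, ediam (f '' closedBall (γ (subintervalMidpoint N k)) (2 * N : ℝ)⁻¹) ^ α) ^
        (p / α) ≤
      K * (G.map P (closedBall a (2 * N : ℝ)⁻¹) /
        ENNReal.ofReal (2 * N : ℝ)⁻¹ ^ (d - 1 - p * (1 - 1 / α))) := by
  have hr : 0 < (2 * N : ℝ)⁻¹ := by positivity
  have hcard : Fintype.card (Fin N) * (2 * N : ℝ)⁻¹ ≤ 1 := by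
    rw [Fintype.card_fin, ← div_eq_mul_inv, div_le_one (by positivity)]
    linarith [(Nat.cast_nonneg N : (0 : ℝ) ≤ N)]
  refine (rpow_sum_rpow_le_of_card_mul_le_one hα hαp hr hcard fun k ↦ hf _ hr).trans ?_
  gcongr
  refine sum_measure_closedBall_le_map hG hP (fun _ ↦ hPγ _) hr ?_
  simpa only [hγ.dist_eq] using pairwise_le_dist_subintervalMidpoint N

lemma tendsto_sum_ediam_image_closedBall (hα : 0 < α) (hαp : α ≤ p) (hG : G ≪ μ)
    (hf : MorreyEstimate f G K p d) (hP : LipschitzWith 1 P) (hγ : Isometry γ)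
    (hPγ : ∀ t, P (γ t) = a)
    (ha : Tendsto (fun r ↦ G.map P (closedBall a r) /
      ENNReal.ofReal r ^ (d - 1 - p * (1 - 1 / α))) (𝓝[>] 0) (𝓝 0)) :
    Tendsto (fun N : ℕ ↦
      ∑ k : Fin N, ediam (f '' closedBall (γ (subintervalMidpoint N k)) (2 * N : ℝ)⁻¹) ^ α)
      atTop (𝓝 0) := by
  have hp : 0 < p := hα.trans_le hαp
  have hr : Tendsto (fun N : ℕ ↦ (2 * N : ℝ)⁻¹) atTop (𝓝[>] 0) :=
    tendsto_inv_atTop_nhdsGT_zero.comp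
      (tendsto_natCast_atTop_atTop.const_mul_atTop (two_pos : (0 : ℝ) < 2))
  have hbound := ENNReal.Tendsto.const_mul (a := (K : ℝ≥0∞)) (ha.comp hr) (.inr ENNReal.coe_ne_top)
  rw [mul_zero] at hbound
  have hpow := tendsto_of_tendsto_of_tendsto_of_le_of_le' tendsto_const_nhds hbound
    (.of_forall fun _ ↦ zero_le) ((eventually_ne_atTop 0).mono fun N hN ↦
      rpow_sum_ediam_image_closedBall_le hα hαp hG hf hP hγ hPγ hN)
  have hroot := hpow.ennrpow_const (p / α)⁻¹
  rw [ENNReal.zero_rpow_of_pos (by positivity)] at hroot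
  exact hroot.congr fun N ↦ ENNReal.rpow_rpow_inv (by positivity) _

variable [MeasurableSpace Y] [BorelSpace Y]

lemma hausdorffMeasure_image_Ico_eq_zero (hα : 0 < α) (hαp : α ≤ p) (hG : G ≪ μ)
    (hf : MorreyEstimate f G K p d) (hP : LipschitzWith 1 P) (hγ : Isometry γ)
    (hPγ : ∀ t, P (γ t) = a)
    (ha : Tendsto (fun r ↦ G.map P (closedBall a r) /
      ENNReal.ofReal r ^ (d - 1 - p * (1 - 1 / α))) (𝓝[>] 0) (𝓝 0)) :
    μH[α] (f '' (γ '' Ico 0 1)) = 0 := by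
  refine hausdorffMeasure_eq_zero_of_tendsto_sum_ediam hα
    ((eventually_ne_atTop 0).mono fun N hN ↦ ?_)
    (tendsto_sum_ediam_image_closedBall hα hαp hG hf hP hγ hPγ ha)
  calc f '' (γ '' Ico 0 1)
      ⊆ f '' (γ '' ⋃ k : Fin N, closedBall (subintervalMidpoint N k) (2 * N : ℝ)⁻¹) := by
        gcongr
        exact Ico_zero_one_subset_iUnion_closedBall hN
    _ ⊆ ⋃ k : Fin N, f '' closedBall (γ (subintervalMidpoint N k)) (2 * N : ℝ)⁻¹ := by
        simp_rw [image_iUnion]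
        gcongr
        exact (hγ.mapsTo_closedBall _ _).image_subset

theorem hausdorffMeasure_image_range_eq_zero (hα : 0 < α) (hαp : α ≤ p) (hG : G ≪ μ)
    (hf : MorreyEstimate f G K p d) (hP : LipschitzWith 1 P) (hγ : Isometry γ)
    (hPγ : ∀ t, P (γ t) = a)
    (ha : Tendsto (fun r ↦ G.map P (closedBall a r) /
      ENNReal.ofReal r ^ (d - 1 - p * (1 - 1 / α))) (𝓝[>] 0) (𝓝 0)) :
    μH[α] (f '' range γ) = 0 := by
  have hunit (m : ℤ) : μH[α] (f '' ((fun t ↦ γ (m + t)) '' Ico 0 1)) = 0 :=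
    hausdorffMeasure_image_Ico_eq_zero hα hαp hG hf hP
      (hγ.comp (IsometryEquiv.addLeft (m : ℝ)).isometry) (fun t ↦ hPγ _) ha
  refine measure_mono_null ?_ (measure_iUnion_null hunit)
  rintro _ ⟨_, ⟨t, rfl⟩, rfl⟩
  exact mem_iUnion.2 ⟨⌊t⌋, _, ⟨Int.fract t, ⟨Int.fract_nonneg t, Int.fract_lt_one t⟩, rfl⟩,
    by simp only [Int.floor_add_fract]⟩

end Lines

lemma hausdorffMeasure_setOf_mem_and_eq_zero {X : Type*} [EMetricSpace X] [MeasurableSpace X]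
    [BorelSpace X] {s : Set X} {q : X → Prop} {β : ℝ} (hβ : 0 ≤ β)
    (h : ∀ᵐ a : s ∂μH[β], ¬q a) : μH[β] {a | a ∈ s ∧ q a} = 0 := by
  have hcoe : {a | a ∈ s ∧ q a} = (↑) '' {a : s | q a} := by
    ext a
    simp [and_comm]
  rw [hcoe, isometry_subtype_coe.hausdorffMeasure_image (.inl hβ)]
  simpa [ae_iff] using h

lemma map_linearMap_absolutelyContinuous_hausdorffMeasure {E F : Type*} [NormedAddCommGroup E]
    [NormedSpace ℝ E] [FiniteDimensional ℝ E] [MeasurableSpace E] [BorelSpace E]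
    [NormedAddCommGroup F] [NormedSpace ℝ F] [FiniteDimensional ℝ F] [MeasurableSpace F]
    [BorelSpace F] {G μ : Measure E} [μ.IsAddHaarMeasure] (hG : G ≪ μ) {T : E →ₗ[ℝ] F}
    (hT : Function.Surjective T) : G.map T ≪ μH[finrank ℝ F] := by
  obtain ⟨c, -, hc⟩ := T.exists_map_addHaar_eq_smul_addHaar μ μH[finrank ℝ F] hT
  refine (hG.map T.continuous_of_finiteDimensional.measurable).trans ?_
  rw [hc]
  exact Measure.smul_absolutelyContinuous

section Projection

variable {E : Type*} [NormedAddCommGroup E] [InnerProductSpace ℝ E]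

lemma exists_norm_eq_one_span_singleton_eq {L : Submodule ℝ E} (hL : finrank ℝ L = 1) :
    ∃ u : E, ‖u‖ = 1 ∧ ℝ ∙ u = L := by
  have : Nontrivial L := nontrivial_of_finrank_pos (R := ℝ) (by simp [hL])
  obtain ⟨u, hu⟩ := exists_norm_eq L zero_le_one
  have hu0 : (u : E) ≠ 0 := ne_zero_of_norm_ne_zero (hu.trans_ne one_ne_zero)
  exact ⟨u, hu, (eq_span_singleton_of_mem_of_finrank_eq_one hL u.2 hu0).symm⟩

variable [FiniteDimensional ℝ E] [MeasurableSpace E] [BorelSpace E] {G μ : Measure E}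
  [μ.IsAddHaarMeasure] {Y : Type*} [EMetricSpace Y] [MeasurableSpace Y] [BorelSpace Y] {f : E → Y}
  {K : ℝ≥0} {p d α : ℝ} {L : Submodule ℝ E}

lemma hausdorffMeasure_image_line_eq_zero (hα : 0 < α) (hαp : α ≤ p) (hG : G ≪ μ)
    (hf : MorreyEstimate f G K p d) (hL : finrank ℝ L = 1) {a : Lᗮ}
    (ha : Tendsto (fun r ↦ G.map Lᗮ.orthogonalProjectionOnto (closedBall a r) /
      ENNReal.ofReal r ^ (d - 1 - p * (1 - 1 / α))) (𝓝[>] 0) (𝓝 0)) :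
    μH[α] (f '' {x | ∃ v ∈ L, x = a + v}) = 0 := by
  obtain ⟨u, hu, rfl⟩ := exists_norm_eq_one_span_singleton_eq hL
  have hγ : Isometry fun t : ℝ ↦ (a : E) + t • u := by
    refine Isometry.of_dist_eq fun s t ↦ ?_
    rw [dist_add_left, dist_eq_norm, ← sub_smul, norm_smul, hu, mul_one, ← dist_eq_norm]
  have hPγ (t : ℝ) : (ℝ ∙ u)ᗮ.orthogonalProjectionOnto ((a : E) + t • u) = a := by
    rw [map_add, map_smul, Submodule.orthogonalProjectionOnto_mem_subspace_eq_self,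
      Submodule.orthogonalProjectionOnto_orthogonalComplement_singleton_eq_zero, smul_zero,
      add_zero]
  have hline : {x : E | ∃ v ∈ ℝ ∙ u, x = a + v} = range fun t : ℝ ↦ (a : E) + t • u := by
    ext x
    simp [Submodule.mem_span_singleton, eq_comm]
  rw [hline]
  exact hausdorffMeasure_image_range_eq_zero hα hαp hG hf
    (ℝ ∙ u)ᗮ.lipschitzWith_orthogonalProjectionOnto hγ hPγ ha

end Projection

lemma sub_mul_one_sub_one_div_mem_Ico {d p α : ℝ} (hd : 1 ≤ d) (hdp : d < p) (hα₁ : 1 < α)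
    (hα₂ : α ≤ p / (p - (d - 1))) : d - 1 - p * (1 - 1 / α) ∈ Ico 0 (d - 1) := by
  have hdiv : p - (d - 1) ≤ p / α := (le_div_comm₀ (by linarith) (by linarith)).1 hα₂
  have hlt : p / α < p := div_lt_self (by linarith) hα₁
  rw [mul_sub, mul_one, mul_one_div]
  exact ⟨by linarith, by linarith⟩

lemma memLp_of_lintegral_ofReal_norm_rpow_lt_top {Ω F : Type*} [MeasurableSpace Ω]
    [NormedAddCommGroup F] {μ : Measure Ω} {g : Ω → F} {p : ℝ} (hg : AEStronglyMeasurable g μ)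
    (hp : 0 < p) (h : ∫⁻ x, ENNReal.ofReal (‖g x‖ ^ p) ∂μ < ⊤) :
    MemLp g (ENNReal.ofReal p) μ := by
  refine ⟨hg, ?_⟩
  rw [eLpNorm_lt_top_iff_lintegral_rpow_enorm_lt_top (by simpa using hp) ENNReal.ofReal_ne_top,
    ENNReal.toReal_ofReal hp.le]
  simpa only [← ofReal_norm, ENNReal.ofReal_rpow_of_nonneg (norm_nonneg _) hp.le] using h

end BMT

open BMT Module in
theorem BMT_sobolev_line_distortion_general {E V : Type*}
    [NormedAddCommGroup E] [InnerProductSpace ℝ E] [FiniteDimensional ℝ E]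
    [MeasurableSpace E] [BorelSpace E] {μ : Measure E} [μ.IsAddHaarMeasure]
    [NormedAddCommGroup V] [NormedSpace ℝ V] [CompleteSpace V] [MeasurableSpace V] [BorelSpace V]
    {p : ℝ} (hp : finrank ℝ E < p) {f : E → V} (hf : Continuous f) {g : E → E →L[ℝ] V}
    (hg : MemLp g (ENNReal.ofReal p) μ) (hfg : HasWeakFDeriv f g μ)
    {α : ℝ} (hα₁ : 1 < α) (hα₂ : α ≤ p / (p - ((finrank ℝ E : ℝ) - 1)))
    {L : Submodule ℝ E} (hL : finrank ℝ L = 1)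
    {β : ℝ} (hβ : β = ((finrank ℝ E : ℝ) - 1) - p * (1 - 1 / α)) :
    μH[β] {a : E | a ∈ Lᗮ ∧ μH[α] (f '' {x | ∃ v ∈ L, x = a + v}) ≠ 0} = 0 := by
  have hd : (1 : ℝ) ≤ finrank ℝ E := by exact_mod_cast hL ▸ L.finrank_le
  have hcodim : (finrank ℝ Lᗮ : ℝ) = finrank ℝ E - 1 := by
    rw [← L.finrank_add_finrank_orthogonal, hL]
    push_cast
    ring
  have hαp : α ≤ p := hα₂.trans (div_le_self (by linarith) (by linarith))
  obtain ⟨hβ0, hβd⟩ : β ∈ Ico 0 (finrank ℝ E - 1 : ℝ) :=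
    hβ ▸ sub_mul_one_sub_one_div_mem_Ico hd hp hα₁ hα₂
  set G := energyMeasure g p μ
  have : IsFiniteMeasure G := isFiniteMeasure_energyMeasure hg (by linarith)
  have hG : G ≪ μ := withDensity_absolutelyContinuous _ _
  have hν : G.map Lᗮ.orthogonalProjectionOnto ≪ μH[finrank ℝ Lᗮ] :=
    map_linearMap_absolutelyContinuous_hausdorffMeasure hG
      (T := Lᗮ.orthogonalProjectionOnto.toLinearMap)
      fun a ↦ ⟨a, Lᗮ.orthogonalProjectionOnto_mem_subspace_eq_self a⟩
  obtain ⟨K, hK⟩ := hfg.exists_morreyEstimate hf hg (by linarith) hp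
  refine hausdorffMeasure_setOf_mem_and_eq_zero hβ0 ?_
  filter_upwards [ae_tendsto_measure_closedBall_div_rpow (X := Lᗮ) hβ0 (hcodim ▸ hβd) hν] with a ha
  exact not_not.2 (hausdorffMeasure_image_line_eq_zero (by linarith) hαp hG hK hL (hβ ▸ ha))

/-- **Balogh–Monti–Tyson.** If `p > n ≥ 2`, `f : ℝⁿ → ℝᴺ` is a continuous map in
`W^{1,p}(ℝⁿ; ℝᴺ)` (with weak derivative `g`), `α ∈ (1, p/(p-(n-1))]`, `L` is a
one-dimensional linear subspace of `ℝⁿ` and `β = (n-1) - p(1 - 1/α)`, then the set of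
`a ∈ L^⊥` with `H^α(f(a + L)) ≠ 0` has `H^β`-measure zero. -/
theorem BMT_sobolev_line_distortion
    (n N : ℕ) (hn : 2 ≤ n) (hN : 0 < N) (p : ℝ) (hp : (n : ℝ) < p)
    (f : EuclideanSpace ℝ (Fin n) → EuclideanSpace ℝ (Fin N)) (hf_cont : Continuous f)
    (hf_int : ∫⁻ x, ENNReal.ofReal (‖f x‖ ^ p) < ⊤)
    (g : EuclideanSpace ℝ (Fin n) → (EuclideanSpace ℝ (Fin n) →L[ℝ] EuclideanSpace ℝ (Fin N)))
    (hg_meas : Measurable g)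
    (hg_int : ∫⁻ x, ENNReal.ofReal (‖g x‖ ^ p) < ⊤)
    (h_weak_deriv : ∀ φ : EuclideanSpace ℝ (Fin n) → ℝ, ContDiff ℝ (⊤ : ℕ∞) φ →
      HasCompactSupport φ → ∀ i : Fin n,
        ∫ x, (fderiv ℝ φ x (EuclideanSpace.single i 1)) • f x =
          - ∫ x, φ x • g x (EuclideanSpace.single i 1))
    (α : ℝ) (hα₁ : 1 < α) (hα₂ : α ≤ p / (p - ((n : ℝ) - 1)))
    (L : Submodule ℝ (EuclideanSpace ℝ (Fin n))) (hL : Module.finrank ℝ L = 1)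
    (β : ℝ) (hβ : β = ((n : ℝ) - 1) - p * (1 - 1 / α)) :
    μH[β] {a : EuclideanSpace ℝ (Fin n) |
      a ∈ Lᗮ ∧ μH[α] (f '' {x | ∃ v ∈ L, x = a + v}) ≠ 0} = 0 := by
  have hp1 : 1 ≤ p := (by exact_mod_cast hn.trans' one_le_two : (1 : ℝ) ≤ n).trans hp.le
  have hg : MemLp g (ENNReal.ofReal p) volume :=
    BMT.memLp_of_lintegral_ofReal_norm_rpow_lt_top hg_meas.aestronglyMeasurable (by linarith) hg_int
  have hspan : Submodule.span ℝ (range fun i : Fin n ↦ EuclideanSpace.single i (1 : ℝ)) = ⊤ := by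
    simpa [funext (EuclideanSpace.basisFun_apply (Fin n) ℝ)] using
      (EuclideanSpace.basisFun (Fin n) ℝ).toBasis.span_eq
  have hfg : BMT.HasWeakFDeriv f g volume :=
    .of_span_eq_top hspan hf_cont.locallyIntegrable
      (hg.locallyIntegrable (ENNReal.one_le_ofReal.2 hp1))
      fun φ hφ hφc ↦ forall_mem_range.2 (h_weak_deriv φ hφ hφc)
  rw [← finrank_euclideanSpace_fin (𝕜 := ℝ) (n := n)] at hp hα₂ hβ
  exact BMT_sobolev_line_distortion_general hp hf_cont hg hfg hα₁ hα₂ hL hβ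
end

section
/- Let f : ℝⁿ → ℝⁿ, n ≥ 2, be a quasiconformal homeomorphism, let L be a one-dimensional linear subspace of ℝⁿ, let α ∈ (1, n), and set β = (n/α) − 1. Then the set of points a in the orthogonal complement L^⊥ for which the α-dimensional Hausdorff measure of f(a + L) is nonzero has β-dimensional Hausdorff measure zero. -/
open Set Metric Filter MeasureTheory
open scoped ENNReal Topology NNReal

noncomputable section

/-- `L_Φ(x,r) = sup {|Φ(x) - Φ(y)| : y ∈ Ω, |x - y| ≤ r}`. -/
noncomputable def linDil {X : Type*} [MetricSpace X] (Ω : Set X) (Φ : X → X) (x : X) (r : ℝ) :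
    ℝ≥0∞ :=
  ⨆ y ∈ {y | y ∈ Ω ∧ dist x y ≤ r}, edist (Φ x) (Φ y)

/-- `l_Φ(x,r) = inf {|Φ(x) - Φ(y)| : y ∈ Ω, |x - y| ≥ r}`. -/
noncomputable def linCon {X : Type*} [MetricSpace X] (Ω : Set X) (Φ : X → X) (x : X) (r : ℝ) :
    ℝ≥0∞ :=
  ⨅ y ∈ {y | y ∈ Ω ∧ r ≤ dist x y}, edist (Φ x) (Φ y)

/-- `H_Φ(x) = limsup_{r → 0⁺} L_Φ(x,r) / l_Φ(x,r)`. -/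
noncomputable def qcH {X : Type*} [MetricSpace X] (Ω : Set X) (Φ : X → X) (x : X) : ℝ≥0∞ :=
  Filter.limsup (fun r : ℝ => linDil Ω Φ x r / linCon Ω Φ x r) (𝓝[>] (0 : ℝ))

/-- A map `Φ`, viewed as a map of `Ω` into `X`, is quasiconformal if `H_Φ(x) ≤ H` for all
`x ∈ Ω`, for some finite `H ≥ 1`. -/
def QuasiconformalOn {X : Type*} [MetricSpace X] (Ω : Set X) (Φ : X → X) : Prop :=
  ∃ H : ℝ, 1 ≤ H ∧ ∀ x ∈ Ω, qcH Ω Φ x ≤ ENNReal.ofReal H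

/-- `Φ` restricts to a homeomorphism of `Ω` onto `Ω'`. -/
def IsHomeoOn {X : Type*} [TopologicalSpace X] (Φ : X → X) (Ω Ω' : Set X) : Prop :=
  ∃ e : Ω ≃ₜ Ω', ∀ x : Ω, (e x : X) = Φ (x : X)

/-- `f` is a similarity with ratio `r`. -/
def IsSimilarityWith {X : Type*} [MetricSpace X] (r : ℝ) (f : X → X) : Prop :=
  0 < r ∧ ∀ x y, dist (f x) (f y) = r * dist x y

/-- The strong separation condition for the iterated function system `f` on the set `Q`:
each `f i` maps the closure of `Q` into `Q`, and the images of the closure of `Q` are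
pairwise disjoint. -/
def StrongSeparation {X : Type*} [MetricSpace X] {ι : Type*} (f : ι → X → X) (Q : Set X) :
    Prop :=
  (∀ i, f i '' closure Q ⊆ Q) ∧
    ∀ i j, i ≠ j → Disjoint (f i '' closure Q) (f j '' closure Q)

/-- `f_σ = f_{σ₁} ∘ ⋯ ∘ f_{σ_k}` for a finite word `σ`. -/
def iterComp {X ι : Type*} (f : ι → X → X) : List ι → X → X
  | [] => id
  | i :: w => f i ∘ iterComp f w

/-- The invariant set `K = ⋂_k ⋃_{|σ| = k} f_σ(closure Q)` of an iterated function system. -/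
def invariantSet {X : Type*} [MetricSpace X] {ι : Type*} (f : ι → X → X) (Q : Set X) :
    Set X :=
  ⋂ k : ℕ, ⋃ w : Fin k → ι, iterComp f (List.ofFn w) '' closure Q

/-- The distance between two subsets of a metric space. -/
noncomputable def setDist {X : Type*} [MetricSpace X] (A B : Set X) : ℝ :=
  sInf ((fun p : X × X => dist p.1 p.2) '' A ×ˢ B)

end

/-!
Let `P` be the orthogonal projection onto `Lᗮ` and `ν A = m (f '' A)` the pullback of Lebesgue
measure. On balls of small radius `r` the map is weakly quasisymmetric, so
`diam (f '' B) ^ n ≲ ν B`. The piece of a fibre `a + L` in a bounded region is covered by about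
`r ^ (-1)` such balls with bounded overlap, all inside the tube `P ⁻¹' closedBall a r`, and the
power mean inequality gives
`r ^ β * (∑ diam (f '' B) ^ α) ^ (n / α) ≲ ν (P ⁻¹' closedBall a r)`.
Hence an exceptional `a` has `r ^ β ≲ π (closedBall a r)` for all small `r`, where `π` is the image
of (a bounded restriction of) `ν` under `P`, and a covering argument bounds the `β`-dimensional
Hausdorff measure of a set of such points by its `π`-measure. As `β < dim Lᗮ`, that set is Lebesgue
null, so it suffices that `π ≪ μH[dim Lᗮ]`, which is Lusin's condition (N) for `f`.

For condition (N), weak quasisymmetry gives a coarea-type inequality: for null `Z`, the lengths of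
the images of the parallel lines in a ball `B` integrate to at most a multiple of
`m B ^ (1 - 1 / n) * m (f '' (B \ Z)) ^ (1 / n)`. At a density point of `f '' Z` the right-hand side
is too small for the lengths that weak quasisymmetry forces.
-/

open Module

section WeakQuasisymmetry

variable {X Y : Type*} [MetricSpace X] [MetricSpace Y]

/-- `f` is weakly quasisymmetric at `x` with constant `M` below the scale `δ`. This is the only
consequence of quasiconformality that is used; the scale is allowed to depend on the point. -/
def WeaklyQuasisymmetricAt (f : X → Y) (M δ : ℝ) (x : X) : Prop :=
  ∀ ⦃y z : X⦄, dist y x < δ → dist y x ≤ dist z x → dist (f y) (f x) ≤ M * dist (f z) (f x)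

theorem edist_le_mul_edist_of_linDil_div_linCon_le {f : X → X} {x y z : X} {C : ℝ≥0∞}
    (hC : C ≠ 0) (hC' : C ≠ ∞)
    (h : linDil univ f x (dist y x) / linCon univ f x (dist y x) ≤ C)
    (hyz : dist y x ≤ dist z x) : edist (f y) (f x) ≤ C * edist (f z) (f x) := by
  have hL : edist (f x) (f y) ≤ linDil univ f x (dist y x) :=
    le_iSup₂ (f := fun y (_ : y ∈ {y | y ∈ univ ∧ dist x y ≤ _}) => edist (f x) (f y)) y
      ⟨mem_univ y, (dist_comm x y).le⟩
  have hl : linCon univ f x (dist y x) ≤ edist (f x) (f z) :=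
    iInf₂_le (f := fun z (_ : z ∈ {y | y ∈ univ ∧ _ ≤ dist x y}) => edist (f x) (f z)) z
      ⟨mem_univ z, hyz.trans (dist_comm z x).le⟩
  rw [edist_comm (f y), edist_comm (f z), ← ENNReal.div_le_iff_le_mul (.inr hC') (.inr hC)]
  exact (ENNReal.div_le_div hL hl).trans h

theorem QuasiconformalOn.exists_weaklyQuasisymmetricAt {f : X → X}
    (hf : QuasiconformalOn univ f) :
    ∃ M, 1 ≤ M ∧ ∀ x, ∃ δ > 0, WeaklyQuasisymmetricAt f M δ x := by
  obtain ⟨H, hH, hfH⟩ := hf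
  have hH' : 0 < H + 1 := by linarith
  refine ⟨H + 1, by linarith, fun x => ?_⟩
  have hlt : qcH univ f x < ENNReal.ofReal (H + 1) :=
    (hfH x (mem_univ x)).trans_lt ((ENNReal.ofReal_lt_ofReal_iff hH').2 (lt_add_one H))
  obtain ⟨δ, hδ, hratio⟩ := mem_nhdsGT_iff_exists_Ioo_subset.1 (eventually_lt_of_limsup_lt hlt)
  refine ⟨δ, hδ, fun y z hy hyz => ?_⟩
  rcases eq_or_ne y x with rfl | hne
  · rw [dist_self]
    positivity
  have := edist_le_mul_edist_of_linDil_div_linCon_le (ENNReal.ofReal_pos.2 hH').ne'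
    ENNReal.ofReal_ne_top (hratio ⟨dist_pos.2 hne, hy⟩).le hyz
  rwa [edist_dist, edist_dist, ← ENNReal.ofReal_mul hH'.le,
    ENNReal.ofReal_le_ofReal_iff (by positivity)] at this

namespace WeaklyQuasisymmetricAt

variable {f : X → Y} {M δ δ' : ℝ} {x y z q : X}

theorem mono (h : WeaklyQuasisymmetricAt f M δ x) (hδ : δ' ≤ δ) :
    WeaklyQuasisymmetricAt f M δ' x :=
  fun _ _ hy => h (hy.trans_le hδ)

theorem image_closedBall_subset (h : WeaklyQuasisymmetricAt f M δ x) (hq : dist q x < δ) :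
    f '' closedBall x (dist q x) ⊆ closedBall (f x) (M * dist (f q) (f x)) := by
  rintro _ ⟨y, hy, rfl⟩
  exact h (lt_of_le_of_lt hy hq) hy

theorem div_le_dist (h : WeaklyQuasisymmetricAt f M δ x) (hM : 0 < M) (hq : dist q x < δ)
    (hy : dist q x ≤ dist y x) : dist (f q) (f x) / M ≤ dist (f y) (f x) :=
  (div_le_iff₀' hM).2 (h hq hy)

theorem ball_subset_image_closedBall (h : WeaklyQuasisymmetricAt f M δ x)
    (hf : Function.Surjective f) (hM : 0 < M) (hq : dist q x < δ) :
    ball (f x) (dist (f q) (f x) / M) ⊆ f '' closedBall x (dist q x) := by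
  intro w hw
  obtain ⟨y, rfl⟩ := hf w
  refine mem_image_of_mem f (mem_closedBall.2 (le_of_not_ge fun hy => ?_))
  exact (h.div_le_dist hM hq hy).not_gt hw

theorem dist_lt_of_mul_lt (h : WeaklyQuasisymmetricAt f M δ x) (hy : dist y x < δ)
    (hlt : M * dist (f z) (f x) < dist (f y) (f x)) : dist z x < dist y x :=
  lt_of_not_ge fun hyz => (h hy hyz).not_gt hlt

theorem dist_chain_le {y : ℕ → X} {m : ℕ} (hy : ∀ i < m, WeaklyQuasisymmetricAt f M δ (y i))
    (hstep : ∀ i < m, M * dist (f (y (i + 1))) (f (y i)) < dist (f x) (f (y i)))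
    (hδ : 2 ^ m * dist (y 0) x < δ) : ∀ i ≤ m, dist (y i) x ≤ 2 ^ i * dist (y 0) x := by
  intro i
  induction i with
  | zero => simp
  | succ i ih =>
    intro hi
    have hyi := ih (Nat.le_of_succ_le hi)
    have hyδ : dist x (y i) < δ := by
      refine (dist_comm x (y i)).trans_lt ((hyi.trans ?_).trans_lt hδ)
      gcongr
      · norm_num
      · lia
    have hlt := (hy i hi).dist_lt_of_mul_lt hyδ (hstep i hi)
    calc dist (y (i + 1)) x ≤ dist (y (i + 1)) (y i) + dist (y i) x := dist_triangle _ _ _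
      _ ≤ dist (y i) x + dist (y i) x := by gcongr; exact hlt.le.trans (dist_comm _ _).le
      _ ≤ 2 ^ (i + 1) * dist (y 0) x := by rw [pow_succ]; linarith

end WeaklyQuasisymmetricAt

end WeakQuasisymmetry

section Contraction

variable {X E : Type*} [MetricSpace X] [NormedAddCommGroup E] [NormedSpace ℝ E]
  {f : X → E} {M δ : ℝ} {x q : X}

namespace WeaklyQuasisymmetricAt

-- Points of weak quasisymmetry are selected near an arithmetic progression on a ray issuing from
-- `f x`. Their preimages at most double their distance to `x` at each step, so if the first one
-- were too close to `x`, then the last one would be closer to `x` than `q`, although its image is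
-- farther away than weak quasisymmetry at `x` allows.
theorem dist_image_le_of_dense [Nontrivial E] (hx : WeaklyQuasisymmetricAt f M δ x) (hM : 1 ≤ M)
    {ρ : ℝ} (hρ : 0 < ρ) {m : ℕ}
    (hm : M * dist (f q) (f x) ≤ (8 * M + m - 1) * ρ)
    (hdense : ∀ w ∈ closedBall (f x) ((8 * M + m) * ρ),
      ∃ z, WeaklyQuasisymmetricAt f M δ z ∧ dist (f z) w < ρ)
    (hq : dist q x < δ) {y : X} (hy : 2 ^ m * dist y x < dist q x) :
    dist (f y) (f x) ≤ 9 * M ^ 2 * ρ := by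
  obtain ⟨u, hu⟩ := exists_norm_eq E zero_le_one
  let w (i : ℕ) : E := f x + ((8 * M + i) * ρ) • u
  have hw (i : ℕ) : dist (w i) (f x) = (8 * M + i) * ρ := by
    rw [dist_eq_norm, add_sub_cancel_left, norm_smul, hu, mul_one,
      Real.norm_of_nonneg (by positivity)]
  have hw_succ (i : ℕ) : dist (w (i + 1)) (w i) = ρ := by
    rw [dist_eq_norm, add_sub_add_left_eq_sub, ← sub_smul, norm_smul, hu, mul_one]
    push_cast
    rw [show (8 * M + (i + 1)) * ρ - (8 * M + i) * ρ = ρ by ring, Real.norm_of_nonneg hρ.le]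
  have : Nonempty X := ⟨x⟩
  choose! z hz hzw using fun i (hi : i ≤ m) =>
    hdense (w i) (mem_closedBall.2 ((hw i).trans_le (by gcongr)))
  have hlow {i : ℕ} (hi : i ≤ m) : (8 * M + i - 1) * ρ < dist (f x) (f (z i)) := by
    linarith [hw i, hzw i hi, dist_triangle_left (w i) (f x) (f (z i)),
      dist_comm (f x) (f (z i))]
  have hstep (i : ℕ) (hi : i < m) :
      M * dist (f (z (i + 1))) (f (z i)) < dist (f x) (f (z i)) := by
    have hi3 : dist (f (z (i + 1))) (f (z i)) ≤ 3 * ρ := by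
      linarith [hw_succ i, hzw i hi.le, hzw (i + 1) hi,
        dist_triangle4_right (f (z (i + 1))) (f (z i)) (w (i + 1)) (w i)]
    nlinarith [hlow hi.le, mul_le_mul_of_nonneg_left hi3 (zero_le_one.trans hM),
      mul_nonneg (Nat.cast_nonneg (α := ℝ) i) hρ.le]
  by_contra! hfar
  have hyq : dist y x ≤ 2 ^ m * dist y x :=
    le_mul_of_one_le_left dist_nonneg (one_le_pow₀ one_le_two)
  have hstart : dist (z 0) x < dist y x := by
    refine hx.dist_lt_of_mul_lt (by linarith) (lt_of_le_of_lt ?_ hfar)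
    have hz0 : dist (f (z 0)) (f x) ≤ 9 * M * ρ := by
      have := hw 0
      push_cast at this
      nlinarith [hzw 0 m.zero_le, dist_triangle (f (z 0)) (w 0) (f x)]
    nlinarith
  have hend : dist (z m) x < dist q x := by
    have hpow : 2 ^ m * dist (z 0) x ≤ 2 ^ m * dist y x := by gcongr
    exact (dist_chain_le (fun i hi => hz i hi.le) hstep (by linarith) m le_rfl).trans_lt
      (by linarith)
  linarith [hx (hend.trans hq) hend.le, hlow le_rfl, dist_comm (f x) (f (z m))]

theorem exists_contraction [Nontrivial E] (hM : 1 ≤ M) :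
    ∃ ε ∈ Ioc (0 : ℝ) 1, ∃ σ > 0, ∀ {f : X → E} {δ : ℝ} {x q : X}, WeaklyQuasisymmetricAt f M δ x →
      dist q x < δ →
      (∀ w ∈ closedBall (f x) (2 * M * dist (f q) (f x)),
        ∃ z, WeaklyQuasisymmetricAt f M δ z ∧ dist (f z) w < σ * dist (f q) (f x)) →
      ∀ y, dist y x ≤ ε * dist q x → dist (f y) (f x) ≤ dist (f q) (f x) / (2 * M) := by
  set m := ⌈18 * M ^ 4⌉₊
  have hm_ge : 18 * M ^ 4 ≤ m := Nat.le_ceil _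
  have hm_lt : m < 18 * M ^ 4 + 1 := Nat.ceil_lt_add_one (by positivity)
  have : 0 < M := by linarith
  refine ⟨(2 ^ (m + 1))⁻¹, ⟨by positivity, inv_le_one_of_one_le₀ (one_le_pow₀ one_le_two)⟩,
    (18 * M ^ 3)⁻¹, by positivity, fun {f δ x q} hx hq hdense y hy => ?_⟩
  set s := dist (f q) (f x)
  have hs : 0 < s := by
    obtain ⟨z, -, hz⟩ := hdense (f x) (mem_closedBall_self (by positivity))
    exact (pos_iff_pos_of_mul_pos (dist_nonneg.trans_lt hz)).1 (by positivity)
  have hqx : 0 < dist q x := dist_pos.2 fun h => hs.ne' (by simp only [s, h, dist_self])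
  have hρ : s = 18 * M ^ 3 * ((18 * M ^ 3)⁻¹ * s) := by field_simp
  have hρ0 : 0 < (18 * M ^ 3)⁻¹ * s := by positivity
  set ρ := (18 * M ^ 3)⁻¹ * s
  have hM3 : M ≤ M ^ 4 := le_self_pow₀ hM (by norm_num)
  have hbound : dist (f y) (f x) ≤ 9 * M ^ 2 * ρ := by
    refine hx.dist_image_le_of_dense hM hρ0 (m := m) ?_ (fun w hw => hdense w ?_) hq ?_
    · calc M * s = (18 * M ^ 4) * ρ := by rw [hρ]; ring
        _ ≤ (8 * M + m - 1) * ρ := by gcongr; linarith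
    · refine closedBall_subset_closedBall ?_ hw
      calc (8 * M + m) * ρ ≤ (36 * M ^ 4) * ρ := by gcongr; linarith
        _ = 2 * M * s := by rw [hρ]; ring
    · calc 2 ^ m * dist y x ≤ 2 ^ m * ((2 ^ (m + 1))⁻¹ * dist q x) := by gcongr
        _ = dist q x / 2 := by rw [pow_succ]; field_simp
        _ < dist q x := half_lt_self hqx
  calc dist (f y) (f x) ≤ 9 * M ^ 2 * ρ := hbound
    _ = s / (2 * M) := by rw [hρ]; field_simp; norm_num

end WeaklyQuasisymmetricAt

end Contraction

section PullbackMeasure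

variable {X Y : Type*} [TopologicalSpace X] [MeasurableSpace X] [BorelSpace X]
  [TopologicalSpace Y] [MeasurableSpace Y] [BorelSpace Y]

/-- The pullback `A ↦ m (f '' A)` of a measure `m` under a homeomorphism `f`, encoded as the
image of `m` under `f.symm`. -/
noncomputable def pullbackMeasure (f : X ≃ₜ Y) (m : Measure Y) : Measure X := m.map f.symm

theorem pullbackMeasure_apply (f : X ≃ₜ Y) (m : Measure Y) (A : Set X) :
    pullbackMeasure f m A = m (f '' A) := by
  rw [pullbackMeasure, f.symm.measurableEmbedding.map_apply, f.image_eq_preimage_symm]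

instance (f : X ≃ₜ Y) (m : Measure Y) [IsFiniteMeasureOnCompacts m] :
    IsFiniteMeasureOnCompacts (pullbackMeasure f m) where
  lt_top_of_isCompact K hK := by
    rw [pullbackMeasure_apply]
    exact (hK.image f.continuous).measure_lt_top

end PullbackMeasure

section BallVolume

variable {E : Type*} [NormedAddCommGroup E] [NormedSpace ℝ E] [Nontrivial E]

theorem exists_dist_eq_of_nonneg (x : E) {r : ℝ} (hr : 0 ≤ r) : ∃ q, dist q x = r := by
  obtain ⟨v, hv⟩ := exists_norm_eq E hr
  exact ⟨x + v, by rw [dist_eq_norm, add_sub_cancel_left, hv]⟩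

theorem ediam_closedBall_le {X : Type*} [PseudoMetricSpace X] (x : X) {r : ℝ} (hr : 0 ≤ r) :
    ediam (closedBall x r) ≤ ENNReal.ofReal (2 * r) := by
  rw [← closedEBall_ofReal hr, ENNReal.ofReal_mul zero_le_two, ENNReal.ofReal_ofNat]
  exact ediam_closedEBall_le

variable [FiniteDimensional ℝ E] [MeasurableSpace E] [BorelSpace E]

theorem ofReal_pow_finrank_eq_mul_addHaar_ball (m : Measure E) [m.IsAddHaarMeasure] (x : E) {r : ℝ}
    (hr : 0 ≤ r) :
    ENNReal.ofReal r ^ finrank ℝ E = (m (ball 0 1))⁻¹ * m (ball x r) := by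
  rw [Measure.addHaar_ball m x hr, mul_left_comm,
    ENNReal.inv_mul_cancel (measure_ball_pos m 0 one_pos).ne' measure_ball_lt_top.ne, mul_one,
    ENNReal.ofReal_pow hr]

theorem exists_ediam_image_closedBall_pow_le {X : Type*} [NormedAddCommGroup X] [NormedSpace ℝ X]
    [Nontrivial X] [MeasurableSpace X] [BorelSpace X] (m : Measure E) [m.IsAddHaarMeasure] {M : ℝ}
    (hM : 1 ≤ M) :
    ∃ C : ℝ≥0, ∀ (f : X ≃ₜ E) {δ : ℝ} {x : X} {r : ℝ}, WeaklyQuasisymmetricAt f M δ x → 0 ≤ r →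
      r < δ →
      ediam (f '' closedBall x r) ^ finrank ℝ E ≤ C * pullbackMeasure f m (closedBall x r) := by
  have hC : (m (ball 0 1))⁻¹ ≠ ∞ := ENNReal.inv_ne_top.2 (measure_ball_pos m 0 one_pos).ne'
  refine ⟨((2 * M ^ 2).toNNReal ^ finrank ℝ E) * (m (ball 0 1))⁻¹.toNNReal,
    fun f δ x r hx hr hrδ => ?_⟩
  obtain ⟨q, rfl⟩ := exists_dist_eq_of_nonneg x hr
  set s := dist (f q) (f x)
  have hdiam : ediam (f '' closedBall x (dist q x)) ≤ ENNReal.ofReal (2 * (M * s)) :=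
    (ediam_mono (hx.image_closedBall_subset hrδ)).trans (ediam_closedBall_le _ (by positivity))
  have hvol : ENNReal.ofReal (s / M) ^ finrank ℝ E ≤
      (m (ball 0 1))⁻¹ * pullbackMeasure f m (closedBall x (dist q x)) := by
    rw [ofReal_pow_finrank_eq_mul_addHaar_ball m (f x) (by positivity), pullbackMeasure_apply]
    gcongr
    exact hx.ball_subset_image_closedBall f.surjective (by positivity) hrδ
  calc ediam (f '' closedBall x (dist q x)) ^ finrank ℝ E
      ≤ ENNReal.ofReal (2 * (M * s)) ^ finrank ℝ E := by gcongr
    _ = ENNReal.ofReal (2 * M ^ 2) ^ finrank ℝ E * ENNReal.ofReal (s / M) ^ finrank ℝ E := by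
      rw [← mul_pow, ← ENNReal.ofReal_mul (by positivity)]
      congr 2
      field_simp
    _ ≤ ENNReal.ofReal (2 * M ^ 2) ^ finrank ℝ E *
        ((m (ball 0 1))⁻¹ * pullbackMeasure f m (closedBall x (dist q x))) := by gcongr
    _ = _ := by
      rw [← mul_assoc, ENNReal.coe_mul, ENNReal.coe_pow, ENNReal.coe_toNNReal hC]
      rfl

end BallVolume

section Covering

theorem tsum_rpow_mul_rpow_le {ι : Type*} (a b : ι → ℝ≥0∞) {p q : ℝ} (hp : 0 ≤ p) (hq : 0 ≤ q)
    (hpq : p + q = 1) : ∑' i, a i ^ p * b i ^ q ≤ (∑' i, a i) ^ p * (∑' i, b i) ^ q := by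
  let _ : MeasurableSpace ι := ⊤
  simpa only [lintegral_count] using
    ENNReal.lintegral_mul_norm_pow_le (μ := .count) (f := a) (g := b)
      measurable_from_top.aemeasurable measurable_from_top.aemeasurable hp hq hpq

theorem exists_closedBall_covering_tsum_measure_le_and {X : Type*} [MetricSpace X] [ProperSpace X]
    [HasBesicovitchCovering X] [MeasurableSpace X] [BorelSpace X] (μ ν : Measure X)
    [IsFiniteMeasureOnCompacts μ] [IsFiniteMeasureOnCompacts ν] {s : Set X} (hμ : μ s ≠ ∞)
    (hν : ν s ≠ ∞) {ε : ℝ≥0∞} (hε : ε ≠ 0) {p : X → ℝ → Prop}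
    (hp : ∀ x ∈ s, ∀ᶠ r in 𝓝[>] 0, p x r) :
    ∃ (t : Set X) (r : X → ℝ), t.Countable ∧ t ⊆ s ∧ (∀ x ∈ t, 0 < r x ∧ p x (r x)) ∧
      s ⊆ ⋃ x ∈ t, closedBall x (r x) ∧
      ∑' x : t, μ (closedBall x (r x)) ≤ μ s + ε ∧ ∑' x : t, ν (closedBall x (r x)) ≤ ν s + ε := by
  have : IsFiniteMeasureOnCompacts (μ + ν) :=
    ⟨fun K hK => ENNReal.add_lt_top.2 ⟨hK.measure_lt_top, hK.measure_lt_top⟩⟩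
  obtain ⟨t, r, ht, hts, hr, hcov, hsum⟩ :=
    Besicovitch.exists_closedBall_covering_tsum_measure_le (μ + ν) hε
      (fun x => {r | 0 < r ∧ p x r}) s fun x hx δ hδ =>
        ((eventually_mem_nhdsWithin.and (hp x hx)).and (Ioo_mem_nhdsGT hδ)).exists
  have hsub (π : Measure X) : π s ≤ ∑' x : t, π (closedBall x (r x)) :=
    (measure_mono hcov).trans (measure_biUnion_le π ht _)
  simp only [Measure.add_apply, ENNReal.tsum_add] at hsum
  refine ⟨t, r, ht, hts, hr, hcov, ENNReal.le_of_add_le_add_right hν ?_,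
    ENNReal.le_of_add_le_add_right hμ ?_⟩
  · exact (add_le_add_right (hsub ν) _).trans (hsum.trans_eq (add_right_comm _ _ _))
  · refine (add_le_add_right (hsub μ) _).trans ?_
    rw [add_comm]
    exact hsum.trans_eq (by abel)

theorem eventually_ediam_image_closedBall_le {X Y : Type*} [PseudoMetricSpace X]
    [PseudoEMetricSpace Y] {f : X → Y} {x : X} (hf : ContinuousAt f x) {ε : ℝ≥0∞} (hε : ε ≠ 0) :
    ∀ᶠ r in 𝓝[>] (0 : ℝ), ediam (f '' closedBall x r) ≤ ε := by
  have hnhds : f ⁻¹' closedEBall (f x) (ε / 2) ∈ 𝓝 x :=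
    hf (closedEBall_mem_nhds _ (ENNReal.half_pos hε))
  obtain ⟨ρ, hρ, hsub⟩ := nhds_basis_closedBall.mem_iff.1 hnhds
  filter_upwards [Ioo_mem_nhdsGT hρ] with r hr
  calc ediam (f '' closedBall x r) ≤ ediam (closedEBall (f x) (ε / 2)) :=
        ediam_mono (image_subset_iff.2 ((closedBall_subset_closedBall hr.2.le).trans hsub))
    _ ≤ 2 * (ε / 2) := ediam_closedEBall_le
    _ ≤ ε := ENNReal.mul_div_le

end Covering

section Shadow

variable {X Y Z : Type*} [MetricSpace X] [MetricSpace Y] [MetricSpace Z]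

/-- For a family of balls `closedBall x (r x)`, `x ∈ t`, and a `1`-Lipschitz map `P`, the sum of
the diameters of the images `f '' closedBall x (r x)` over those balls that the fibre
`P ⁻¹' {a}` can meet, namely those with `a ∈ closedBall (P x) (r x)`. -/
noncomputable def shadowSum (f : X → Y) (P : X → Z) (t : Set X) (r : X → ℝ) (a : Z) : ℝ≥0∞ :=
  ∑' x : t, (closedBall (P x) (r x)).indicator (fun _ => ediam (f '' closedBall (x : X) (r x))) a

variable {f : X → Y} {P : X → Z}

theorem tsum_ediam_image_fibre_le_shadowSum (hP : LipschitzWith 1 P) (t : Set X) (r : X → ℝ)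
    (a : Z) :
    ∑' x : t, ediam (f '' (P ⁻¹' {a} ∩ closedBall (x : X) (r x))) ≤ shadowSum f P t r a := by
  refine ENNReal.tsum_le_tsum fun x => ?_
  by_cases ha : a ∈ closedBall (P x) (r x)
  · rw [indicator_of_mem ha]
    exact ediam_mono (image_mono inter_subset_right)
  · have hempty : P ⁻¹' {a} ∩ closedBall (x : X) (r x) = ∅ := by
      refine eq_empty_of_forall_notMem ?_
      rintro y ⟨rfl, hy⟩
      exact ha ((hP.dist_le_mul y x).trans ((one_mul _).trans_le hy))
    rw [hempty, image_empty, ediam_empty]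
    exact zero_le

theorem hausdorffMeasure_one_image_fibre_le_liminf_shadowSum [MeasurableSpace Y] [BorelSpace Y]
    (hP : LipschitzWith 1 P) {A : Set X} {t : ℕ → Set X} {r : ℕ → X → ℝ} {ε : ℕ → ℝ≥0∞}
    (hε : Tendsto ε atTop (𝓝 0)) (ht : ∀ j, (t j).Countable)
    (hdiam : ∀ j, ∀ x ∈ t j, ediam (f '' closedBall x (r j x)) ≤ ε j)
    (hcov : ∀ j, A ⊆ ⋃ x ∈ t j, closedBall x (r j x)) (a : Z) :
    μH[1] (f '' (P ⁻¹' {a} ∩ A)) ≤ liminf (fun j => shadowSum f P (t j) (r j) a) atTop := by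
  have (j : ℕ) : Countable (t j) := (ht j).to_subtype
  refine (Measure.hausdorffMeasure_le_liminf_tsum 1 _ ε hε
    (fun j (x : t j) => f '' (P ⁻¹' {a} ∩ closedBall (x : X) (r j x))) (.of_forall fun j x => ?_)
    (.of_forall fun j => ?_)).trans (liminf_le_liminf (.of_forall fun j => ?_))
  · exact (ediam_mono (image_mono inter_subset_right)).trans (hdiam j x x.2)
  · rw [← image_iUnion, ← inter_iUnion, iUnion_coe_set]
    exact image_mono (inter_subset_inter_right _ (hcov j))
  · simpa only [ENNReal.rpow_one] using tsum_ediam_image_fibre_le_shadowSum hP (t j) (r j) a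

variable [MeasurableSpace Z] [OpensMeasurableSpace Z]

theorem measurable_shadowSum (f : X → Y) (P : X → Z) {t : Set X} (ht : t.Countable) (r : X → ℝ) :
    Measurable (shadowSum f P t r) := by
  have := ht.to_subtype
  exact Measurable.tsum fun x => measurable_const.indicator measurableSet_closedBall

theorem lintegral_shadowSum (f : X → Y) (P : X → Z) {t : Set X} (ht : t.Countable) (r : X → ℝ)
    (μ : Measure Z) :
    ∫⁻ a, shadowSum f P t r a ∂μ =
      ∑' x : t, ediam (f '' closedBall (x : X) (r x)) * μ (closedBall (P x) (r x)) := by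
  have := ht.to_subtype
  simp only [shadowSum]
  rw [lintegral_tsum fun x =>
    (measurable_const.indicator measurableSet_closedBall).aemeasurable]
  exact tsum_congr fun x => lintegral_indicator_const measurableSet_closedBall _

end Shadow

section LengthArea

variable {E F : Type*} [NormedAddCommGroup E] [NormedSpace ℝ E] [FiniteDimensional ℝ E]
  [MeasurableSpace E] [BorelSpace E] [NormedAddCommGroup F] [NormedSpace ℝ F]
  [FiniteDimensional ℝ F] [MeasurableSpace F] [BorelSpace F]

theorem exists_addHaar_closedBall_eq_mul_rpow (m : Measure E) [m.IsAddHaarMeasure] (μ : Measure F)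
    [μ.IsAddHaarMeasure] (hEF : finrank ℝ E = finrank ℝ F + 1) :
    ∃ C : ℝ≥0, ∀ (a : F) (x : E) {r : ℝ}, 0 ≤ r →
      μ (closedBall a r) = C * m (closedBall x r) ^ (1 - (finrank ℝ E : ℝ)⁻¹) := by
  have hn : (1 : ℝ) ≤ finrank ℝ E := by rw [hEF]; simp
  have hp : 0 ≤ 1 - (finrank ℝ E : ℝ)⁻¹ := sub_nonneg.2 (inv_le_one_of_one_le₀ hn)
  set p := 1 - (finrank ℝ E : ℝ)⁻¹ with hp_def
  have hm0 : m (closedBall 0 1) ≠ 0 := (measure_closedBall_pos m 0 one_pos).ne'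
  have hm : m (closedBall 0 1) ≠ ∞ := measure_closedBall_lt_top.ne
  have hmp0 : m (closedBall 0 1) ^ p ≠ 0 := (ENNReal.rpow_pos hm0.bot_lt hm).ne'
  have hmp : m (closedBall 0 1) ^ p ≠ ∞ := ENNReal.rpow_ne_top_of_nonneg hp hm
  have hμ : μ (closedBall 0 1) ≠ ∞ := measure_closedBall_lt_top.ne
  refine ⟨(μ (closedBall 0 1) / m (closedBall 0 1) ^ p).toNNReal, fun a x r hr => ?_⟩
  have hexp : (r ^ finrank ℝ E) ^ p = r ^ finrank ℝ F := by
    rw [← Real.rpow_natCast_mul hr, hp_def, mul_sub, mul_one, mul_inv_cancel₀ (by positivity),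
      hEF, Nat.cast_add_one, add_sub_cancel_right, Real.rpow_natCast]
  rw [ENNReal.coe_toNNReal (ENNReal.div_ne_top hμ hmp0), Measure.addHaar_closedBall' μ a hr,
    Measure.addHaar_closedBall' m x hr, ENNReal.mul_rpow_of_nonneg _ _ hp,
    ENNReal.ofReal_rpow_of_nonneg (by positivity) hp, hexp, mul_left_comm,
    ENNReal.div_mul_cancel hmp0 hmp]

variable {f : E ≃ₜ E} {M : ℝ} {P : E → F}

theorem exists_ediam_image_mul_addHaar_le (m : Measure E) [m.IsAddHaarMeasure] (μ : Measure F)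
    [μ.IsAddHaarMeasure] (hEF : finrank ℝ E = finrank ℝ F + 1) (hM : 1 ≤ M) :
    ∃ C : ℝ≥0, ∀ (f : E ≃ₜ E) {δ : ℝ} {x : E} (a : F) {r : ℝ}, WeaklyQuasisymmetricAt f M δ x →
      0 ≤ r → r < δ → ediam (f '' closedBall x r) * μ (closedBall a r) ≤
        C * (m (closedBall x r) ^ (1 - (finrank ℝ E : ℝ)⁻¹) *
          pullbackMeasure f m (closedBall x r) ^ (finrank ℝ E : ℝ)⁻¹) := by
  have hn : finrank ℝ E ≠ 0 := by lia
  have : Nontrivial E := Module.nontrivial_of_finrank_pos (R := ℝ) (by lia)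
  obtain ⟨C, hC⟩ := exists_ediam_image_closedBall_pow_le (X := E) m hM
  obtain ⟨D, hD⟩ := exists_addHaar_closedBall_eq_mul_rpow m μ hEF
  refine ⟨C ^ (finrank ℝ E : ℝ)⁻¹ * D, fun f δ x a r hx hr hrδ => ?_⟩
  have hdiam : ediam (f '' closedBall x r) ≤
      C ^ (finrank ℝ E : ℝ)⁻¹ * pullbackMeasure f m (closedBall x r) ^ (finrank ℝ E : ℝ)⁻¹ := by
    rw [← ENNReal.mul_rpow_of_nonneg _ _ (by positivity), ENNReal.le_rpow_inv_iff (by positivity),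
      ENNReal.rpow_natCast]
    exact hC f hx hr hrδ
  rw [hD a x hr]
  refine (mul_le_mul_left hdiam _).trans_eq ?_
  rw [ENNReal.coe_mul, ENNReal.coe_rpow_of_nonneg _ (by positivity)]
  ring

theorem exists_shadow_covering (m : Measure E) [m.IsAddHaarMeasure]
    (hW : ∀ x, ∃ δ > 0, WeaklyQuasisymmetricAt f M δ x) {A : Set E} (hA : m A ≠ ∞)
    (hfA : m (f '' A) ≠ ∞) {ε : ℝ≥0∞} (hε : ε ≠ 0) :
    ∃ (t : Set E) (r : E → ℝ), t.Countable ∧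
      (∀ x ∈ t, 0 < r x ∧ (∃ δ > r x, WeaklyQuasisymmetricAt f M δ x) ∧
        ediam (f '' closedBall x (r x)) ≤ ε) ∧
      A ⊆ ⋃ x ∈ t, closedBall x (r x) ∧ ∑' x : t, m (closedBall x (r x)) ≤ m A + ε ∧
      ∑' x : t, pullbackMeasure f m (closedBall x (r x)) ≤ m (f '' A) + ε := by
  rw [← pullbackMeasure_apply] at hfA ⊢
  obtain ⟨t, r, ht, -, hr, hcov, hsum⟩ := exists_closedBall_covering_tsum_measure_le_and m
    (pullbackMeasure f m) hA hfA hε (p := fun x r => (∃ δ > r, WeaklyQuasisymmetricAt f M δ x) ∧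
      ediam (f '' closedBall x r) ≤ ε) fun x _ => by
    obtain ⟨δ, hδ, hx⟩ := hW x
    filter_upwards [Ioo_mem_nhdsGT hδ,
      eventually_ediam_image_closedBall_le f.continuous.continuousAt hε] with r hr hdiam
    exact ⟨⟨δ, hr.2, hx⟩, hdiam⟩
  exact ⟨t, r, ht, hr, hcov, hsum⟩

theorem tendsto_rpow_add_mul_rpow_add {a b : ℝ≥0∞} (ha : a ≠ ∞) (hb : b ≠ ∞) {p q : ℝ}
    (hp : 0 ≤ p) (hq : 0 ≤ q) {ε : ℕ → ℝ≥0∞} (hε : Tendsto ε atTop (𝓝 0)) (C : ℝ≥0) :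
    Tendsto (fun j => C * ((a + ε j) ^ p * (b + ε j) ^ q)) atTop (𝓝 (C * (a ^ p * b ^ q))) := by
  have hlim (c : ℝ≥0∞) (s : ℝ) : Tendsto (fun j => (c + ε j) ^ s) atTop (𝓝 (c ^ s)) := by
    simpa only [add_zero] using (hε.const_add c).ennrpow_const s
  exact ENNReal.Tendsto.const_mul (ENNReal.Tendsto.mul (hlim a p)
    (.inr (ENNReal.rpow_ne_top_of_nonneg hq hb)) (hlim b q)
    (.inr (ENNReal.rpow_ne_top_of_nonneg hp ha))) (.inr ENNReal.coe_ne_top)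

-- The function `a ↦ μH[1] (f '' (P ⁻¹' {a} ∩ A))` need not be measurable; the measurable majorant
-- makes the bound additive in `A`.
theorem exists_measurable_hausdorffMeasure_one_image_fibre_le (m : Measure E) [m.IsAddHaarMeasure]
    (μ : Measure F) [μ.IsAddHaarMeasure] (hEF : finrank ℝ E = finrank ℝ F + 1) (hM : 1 ≤ M) :
    ∃ C : ℝ≥0, ∀ {f : E ≃ₜ E} {P : E → F}, LipschitzWith 1 P →
      (∀ x, ∃ δ > 0, WeaklyQuasisymmetricAt f M δ x) →
      ∀ {A : Set E}, m A ≠ ∞ → m (f '' A) ≠ ∞ →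
      ∃ G : F → ℝ≥0∞, Measurable G ∧ (∀ a, μH[1] (f '' (P ⁻¹' {a} ∩ A)) ≤ G a) ∧
        ∫⁻ a, G a ∂μ ≤ C * (m A ^ (1 - (finrank ℝ E : ℝ)⁻¹) *
          m (f '' A) ^ (finrank ℝ E : ℝ)⁻¹) := by
  have hn : (1 : ℝ) ≤ finrank ℝ E := by rw [hEF]; simp
  have hp : 0 ≤ 1 - (finrank ℝ E : ℝ)⁻¹ := sub_nonneg.2 (inv_le_one_of_one_le₀ hn)
  have hq : 0 ≤ (finrank ℝ E : ℝ)⁻¹ := by positivity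
  obtain ⟨C, hC⟩ := exists_ediam_image_mul_addHaar_le m μ hEF hM
  refine ⟨C, fun {f P} hP hW {A} hA hfA => ?_⟩
  obtain ⟨ε, -, hε0, hε⟩ := exists_seq_strictAnti_tendsto' (zero_lt_one (α := ℝ≥0∞))
  choose t r ht hr hcov hm hν using
    fun j => exists_shadow_covering m hW hA hfA (hε0 j).1.ne'
  refine ⟨fun a => liminf (fun j => shadowSum f P (t j) (r j) a) atTop,
    .liminf fun j => measurable_shadowSum f P (ht j) (r j),
    hausdorffMeasure_one_image_fibre_le_liminf_shadowSum hP hε ht (fun j x hx => (hr j x hx).2.2)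
      hcov, ?_⟩
  have hint (j : ℕ) : ∫⁻ a, shadowSum f P (t j) (r j) a ∂μ ≤
      C * ((m A + ε j) ^ (1 - (finrank ℝ E : ℝ)⁻¹) *
        (m (f '' A) + ε j) ^ (finrank ℝ E : ℝ)⁻¹) := by
    calc ∫⁻ a, shadowSum f P (t j) (r j) a ∂μ
        ≤ ∑' x : t j, C * (m (closedBall x (r j x)) ^ (1 - (finrank ℝ E : ℝ)⁻¹) *
          pullbackMeasure f m (closedBall x (r j x)) ^ (finrank ℝ E : ℝ)⁻¹) := by
          rw [lintegral_shadowSum f P (ht j)]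
          refine ENNReal.tsum_le_tsum fun x => ?_
          obtain ⟨hr0, ⟨δ, hδ, hx⟩, -⟩ := hr j x x.2
          exact hC f _ hx hr0.le hδ
      _ ≤ _ := by
          rw [ENNReal.tsum_mul_left]
          gcongr
          refine (tsum_rpow_mul_rpow_le _ _ hp hq (sub_add_cancel _ _)).trans ?_
          gcongr
          exacts [hm j, hν j]
  calc ∫⁻ a, liminf (fun j => shadowSum f P (t j) (r j) a) atTop ∂μ
      ≤ liminf (fun j => ∫⁻ a, shadowSum f P (t j) (r j) a ∂μ) atTop :=
        lintegral_liminf_le fun j => measurable_shadowSum f P (ht j) (r j)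
    _ ≤ _ := (liminf_le_liminf (.of_forall hint)).trans_eq
        (tendsto_rpow_add_mul_rpow_add hA hfA hp hq hε C).liminf_eq

theorem exists_lintegral_hausdorffMeasure_one_image_fibre_le (m : Measure E) [m.IsAddHaarMeasure]
    (μ : Measure F) [μ.IsAddHaarMeasure] (hEF : finrank ℝ E = finrank ℝ F + 1)
    (hE : 2 ≤ finrank ℝ E) (hM : 1 ≤ M) :
    ∃ C : ℝ≥0, ∀ {f : E ≃ₜ E} {P : E → F}, LipschitzWith 1 P →
      (∀ x, ∃ δ > 0, WeaklyQuasisymmetricAt f M δ x) →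
      ∀ {A Z : Set E}, m A ≠ ∞ → m (f '' A) ≠ ∞ → m Z = 0 →
      ∫⁻ a, μH[1] (f '' (P ⁻¹' {a} ∩ A)) ∂μ ≤ C * (m A ^ (1 - (finrank ℝ E : ℝ)⁻¹) *
        m (f '' (A \ Z)) ^ (finrank ℝ E : ℝ)⁻¹) := by
  have hn : (1 : ℝ) < finrank ℝ E := by exact_mod_cast hE
  have hp : 0 < 1 - (finrank ℝ E : ℝ)⁻¹ := sub_pos.2 (inv_lt_one_of_one_lt₀ hn)
  obtain ⟨C, hC⟩ := exists_measurable_hausdorffMeasure_one_image_fibre_le m μ hEF hM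
  refine ⟨C, fun {f P} hP hW {A Z} hA hfA hZ => ?_⟩
  obtain ⟨G, hG, hGle, hGint⟩ := hC hP hW (A := A ∩ Z)
    (measure_ne_top_of_subset inter_subset_left hA)
    (measure_ne_top_of_subset (image_mono inter_subset_left) hfA)
  obtain ⟨G', -, hG'le, hG'int⟩ := hC hP hW (A := A \ Z)
    (measure_ne_top_of_subset sdiff_subset hA)
    (measure_ne_top_of_subset (image_mono sdiff_subset) hfA)
  have hG0 : ∫⁻ a, G a ∂μ = 0 := by
    rw [measure_mono_null inter_subset_right hZ, ENNReal.zero_rpow_of_pos hp, zero_mul,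
      mul_zero] at hGint
    exact nonpos_iff_eq_zero.1 hGint
  calc ∫⁻ a, μH[1] (f '' (P ⁻¹' {a} ∩ A)) ∂μ ≤ ∫⁻ a, (G a + G' a) ∂μ := by
        refine lintegral_mono fun a => ?_
        rw [← inter_union_sdiff A Z, inter_union_distrib_left, image_union]
        exact (measure_union_le _ _).trans (add_le_add (hGle a) (hG'le a))
    _ = ∫⁻ a, G' a ∂μ := by rw [lintegral_add_left hG, hG0, zero_add]
    _ ≤ _ := hG'int.trans (by gcongr; exact sdiff_subset)

end LengthArea

section LengthLowerBound

theorem edist_le_hausdorffMeasure_one_of_isPreconnected {X : Type*} [MetricSpace X]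
    [MeasurableSpace X] [BorelSpace X] {S : Set X} (hS : IsPreconnected S) {p q : X} (hp : p ∈ S)
    (hq : q ∈ S) : edist p q ≤ μH[1] S := by
  have hdist : LipschitzWith 1 (dist p) := LipschitzWith.dist_right p
  have hIcc : Icc 0 (dist p q) ⊆ dist p '' S :=
    (hS.image _ hdist.continuous.continuousOn).Icc_subset ⟨p, hp, dist_self p⟩ ⟨q, hq, rfl⟩
  calc edist p q = μH[1] (Icc 0 (dist p q)) := by
        rw [hausdorffMeasure_real, Real.volume_Icc, sub_zero, edist_dist]
    _ ≤ μH[1] (dist p '' S) := measure_mono hIcc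
    _ ≤ μH[1] S := by
        simpa only [NNReal.coe_one, ENNReal.coe_one, ENNReal.one_rpow, one_mul] using
          hdist.hausdorffMeasure_image_le zero_le_one S

variable {E : Type*} [NormedAddCommGroup E] [InnerProductSpace ℝ E] (K : Submodule ℝ E)
  [K.HasOrthogonalProjection]

theorem exists_mem_fibre_dist_le (a : K) (x : E) :
    ∃ p, K.orthogonalProjectionOnto p = a ∧ dist p x ≤ dist a (K.orthogonalProjectionOnto x) := by
  refine ⟨x + (a - K.orthogonalProjectionOnto x : K), ?_, ?_⟩
  · rw [map_add, Submodule.orthogonalProjectionOnto_mem_subspace_eq_self, add_sub_cancel]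
  · rw [dist_eq_norm, add_sub_cancel_left, dist_eq_norm, Submodule.coe_norm]

variable {K}

theorem exists_mem_fibre_dist_eq (hK : K ≠ ⊤) {a : K} {x : E} {r : ℝ}
    (ha : dist a (K.orthogonalProjectionOnto x) ≤ r) :
    ∃ q, K.orthogonalProjectionOnto q = a ∧ dist q x = r := by
  have hr : 0 ≤ r := dist_nonneg.trans ha
  have : Nontrivial Kᗮ := by
    rwa [Submodule.nontrivial_iff_ne_bot, Ne, Submodule.orthogonal_eq_bot_iff]
  obtain ⟨p, hpa, hpx⟩ := exists_mem_fibre_dist_le K a x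
  obtain ⟨e, he⟩ := exists_norm_eq Kᗮ zero_le_one
  let q (t : ℝ) : E := p + t • (e : E)
  have hq (t : ℝ) : dist (q t) p = |t| := by
    rw [dist_eq_norm, add_sub_cancel_left, norm_smul, ← Submodule.coe_norm, he, mul_one,
      Real.norm_eq_abs]
  have hqr : r ≤ dist (q (2 * r)) x := by
    have := hq (2 * r)
    rw [abs_of_nonneg (by positivity)] at this
    linarith [dist_triangle_right (q (2 * r)) p x, dist_comm p x]
  obtain ⟨t, -, ht⟩ := intermediate_value_Icc (f := fun t => dist (q t) x)
    (by positivity : (0 : ℝ) ≤ 2 * r) (by fun_prop) ⟨by simpa [q] using hpx.trans ha, hqr⟩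
  refine ⟨q t, ?_, ht⟩
  rw [map_add, map_smul, (Submodule.orthogonalProjectionOnto_eq_zero_iff).2 e.2, smul_zero,
    add_zero, hpa]

theorem ofReal_sub_mul_le_lintegral_hausdorffMeasure_one [MeasurableSpace E] [BorelSpace E]
    (hK : K ≠ ⊤) (μ : Measure K) {f : E → E} (hf : Continuous f) {x : E} {ρ r s₁ s₂ : ℝ}
    (hρr : ρ ≤ r) (hinner : ∀ y, dist y x ≤ ρ → dist (f y) (f x) ≤ s₁)
    (houter : ∀ y, r ≤ dist y x → s₂ ≤ dist (f y) (f x)) :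
    ENNReal.ofReal (s₂ - s₁) * μ (closedBall (K.orthogonalProjectionOnto x) ρ) ≤
      ∫⁻ a, μH[1] (f '' (K.orthogonalProjectionOnto ⁻¹' {a} ∩ closedBall x r)) ∂μ := by
  rw [← setLIntegral_const]
  refine (setLIntegral_mono' measurableSet_closedBall fun a ha => ?_).trans
    (setLIntegral_le_lintegral _ _)
  obtain ⟨p, hpa, hpx⟩ := exists_mem_fibre_dist_le K a x
  obtain ⟨q, hqa, hqx⟩ := exists_mem_fibre_dist_eq hK (ha.out.trans hρr)
  have hpρ : dist p x ≤ ρ := hpx.trans ha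
  have hconv : Convex ℝ (K.orthogonalProjectionOnto ⁻¹' {a} ∩ closedBall x r) :=
    ((convex_singleton a).is_linear_preimage K.orthogonalProjectionOnto.isLinear).inter
      (convex_closedBall x r)
  refine le_trans ?_ (edist_le_hausdorffMeasure_one_of_isPreconnected
    (hconv.isPreconnected.image f hf.continuousOn)
    (mem_image_of_mem f ⟨hpa, mem_closedBall.2 (hpρ.trans hρr)⟩)
    (mem_image_of_mem f ⟨hqa, mem_closedBall.2 hqx.le⟩))
  rw [edist_dist]
  refine ENNReal.ofReal_le_ofReal ?_
  linarith [hinner p hpρ, houter q hqx.ge, dist_triangle_left (f q) (f x) (f p)]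

end LengthLowerBound

section Density

theorem exists_mem_density_of_measure_ne_zero {X : Type*} [MetricSpace X] [ProperSpace X]
    [HasBesicovitchCovering X] [MeasurableSpace X] [BorelSpace X] {m : Measure X}
    [IsFiniteMeasureOnCompacts m] {S : Set X} (hS : m S ≠ 0) :
    ∃ z ∈ S, ∀ η ≠ 0, ∀ᶠ R in 𝓝[>] (0 : ℝ), ∀ T, MeasurableSet T → S ⊆ T →
      m (closedBall z R \ T) ≤ η * m (closedBall z R) := by
  have hfreq : ∃ᶠ z in ae (m.restrict S), z ∈ S := by
    rwa [frequently_ae_mem_iff, Measure.restrict_apply_self]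
  obtain ⟨z, hzS, hz⟩ :=
    (hfreq.and_eventually (Besicovitch.ae_tendsto_measure_inter_div m S)).exists
  refine ⟨z, hzS, fun η hη => ?_⟩
  filter_upwards [hz.eventually_const_lt (ENNReal.sub_lt_self ENNReal.one_ne_top one_ne_zero hη)]
    with R hR T hT hST
  set B := closedBall z R
  have hB : m B ≠ ∞ := measure_closedBall_lt_top.ne
  have hinter : (1 - η) * m B ≤ m (B ∩ T) :=
    (ENNReal.mul_le_of_le_div hR.le).trans
      (measure_mono (subset_inter inter_subset_right (inter_subset_left.trans hST)))
  refine ENNReal.le_of_add_le_add_left (a := m (B ∩ T))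
    (measure_ne_top_of_subset inter_subset_left hB) ?_
  calc m (B ∩ T) + m (B \ T) = 1 * m B := by rw [measure_inter_add_sdiff B hT, one_mul]
    _ ≤ ((1 - η) + η) * m B := by gcongr; exact le_tsub_add
    _ ≤ m (B ∩ T) + η * m B := by rw [add_mul]; gcongr

variable {E : Type*} [NormedAddCommGroup E] [NormedSpace ℝ E] [FiniteDimensional ℝ E]
  [MeasurableSpace E] [BorelSpace E] (m : Measure E) [m.IsAddHaarMeasure]

theorem exists_mem_dist_lt_of_measure_sdiff_le {S : Set E} {z w : E} {R ρ η : ℝ} (hη : 0 ≤ η)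
    (hR : 0 ≤ R) (hρ : 0 < ρ)
    (hS : ∀ T, MeasurableSet T → S ⊆ T →
      m (closedBall z R \ T) ≤ ENNReal.ofReal η * m (closedBall z R))
    (hsub : ball w ρ ⊆ closedBall z R) (hηρ : η * R ^ finrank ℝ E < ρ ^ finrank ℝ E) :
    ∃ y ∈ S, dist y w < ρ := by
  by_contra! hfar
  have hle := hS (ball w ρ)ᶜ measurableSet_ball.compl fun y hy => by
    simpa only [mem_compl_iff, mem_ball, not_lt] using hfar y hy
  rw [sdiff_compl, inter_eq_self_of_subset_right hsub, Measure.addHaar_ball_of_pos m w hρ,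
    Measure.addHaar_closedBall m z hR, ← mul_assoc, ← ENNReal.ofReal_mul hη,
    ENNReal.mul_le_mul_iff_left (measure_ball_pos m 0 one_pos).ne' measure_ball_lt_top.ne,
    ENNReal.ofReal_le_ofReal_iff (by positivity)] at hle
  exact hηρ.not_ge hle

end Density

section LusinN

section Scaling

variable {E F : Type*} [NormedAddCommGroup E] [NormedSpace ℝ E] [FiniteDimensional ℝ E]
  [MeasurableSpace E] [BorelSpace E] [NormedAddCommGroup F] [NormedSpace ℝ F]
  [FiniteDimensional ℝ F] [MeasurableSpace F] [BorelSpace F] (m : Measure E) [m.IsAddHaarMeasure]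

theorem addHaar_closedBall_rpow_inv_finrank (hE : finrank ℝ E ≠ 0) (x : E) {r : ℝ} (hr : 0 ≤ r) :
    m (closedBall x r) ^ (finrank ℝ E : ℝ)⁻¹ =
      ENNReal.ofReal r * m (closedBall 0 1) ^ (finrank ℝ E : ℝ)⁻¹ := by
  have hn : 0 ≤ (finrank ℝ E : ℝ)⁻¹ := by positivity
  rw [Measure.addHaar_closedBall' m x hr, ENNReal.mul_rpow_of_nonneg _ _ hn,
    ENNReal.ofReal_rpow_of_nonneg (by positivity) hn, Real.pow_rpow_inv_natCast hr hE]

theorem eventually_mul_rpow_mul_rpow_lt (μ : Measure F) [μ.IsAddHaarMeasure]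
    (hEF : finrank ℝ E = finrank ℝ F + 1) (C : ℝ≥0) {ε κ c : ℝ} (hε : 0 < ε) (hκ : 0 < κ)
    (hc : 0 < c) :
    ∀ᶠ η in 𝓝[>] (0 : ℝ), ∀ (x z : E) (a : F) {r s : ℝ}, 0 < r → 0 < s →
      C * (m (closedBall x r) ^ (1 - (finrank ℝ E : ℝ)⁻¹) *
        (ENNReal.ofReal η * m (closedBall z (κ * s))) ^ (finrank ℝ E : ℝ)⁻¹) <
      ENNReal.ofReal (c * s) * μ (closedBall a (ε * r)) := by
  have hn : finrank ℝ E ≠ 0 := by lia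
  have hq : 0 < (finrank ℝ E : ℝ)⁻¹ := by positivity
  set ω := m (closedBall 0 1) ^ (finrank ℝ E : ℝ)⁻¹ with hω
  have hω' : ω ≠ ∞ := ENNReal.rpow_ne_top_of_nonneg hq.le measure_closedBall_lt_top.ne
  obtain ⟨D, hD⟩ := exists_addHaar_closedBall_eq_mul_rpow m μ hEF
  have hB {x : E} {r : ℝ} (hr : 0 < r) :
      D * m (closedBall x r) ^ (1 - (finrank ℝ E : ℝ)⁻¹) ≠ 0 := by
    rw [← hD 0 x hr.le]
    exact (measure_closedBall_pos μ 0 hr).ne'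
  have hlim : Tendsto (fun η => C * ω * ENNReal.ofReal κ *
      ENNReal.ofReal η ^ (finrank ℝ E : ℝ)⁻¹) (𝓝[>] 0) (𝓝 0) := by
    have hη : Tendsto ENNReal.ofReal (𝓝[>] 0) (𝓝 0) :=
      (ENNReal.continuous_ofReal.tendsto' 0 0 ENNReal.ofReal_zero).mono_left nhdsWithin_le_nhds
    have := ENNReal.Tendsto.const_mul (a := C * ω * ENNReal.ofReal κ)
      (hη.ennrpow_const (finrank ℝ E : ℝ)⁻¹) (.inr (by finiteness))
    rwa [ENNReal.zero_rpow_of_pos hq, mul_zero] at this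
  have hpos : 0 < ENNReal.ofReal (c * ε ^ finrank ℝ F) * D :=
    ENNReal.mul_pos (ENNReal.ofReal_pos.2 (by positivity)).ne'
      (left_ne_zero_of_mul (hB (x := 0) one_pos))
  filter_upwards [hlim.eventually_lt_const hpos] with η hη x z a r s hr hs
  have hsB : ENNReal.ofReal s * m (closedBall x r) ^ (1 - (finrank ℝ E : ℝ)⁻¹) ≠ 0 :=
    mul_ne_zero (ENNReal.ofReal_pos.2 hs).ne' (right_ne_zero_of_mul (hB hr))
  set B := m (closedBall x r) ^ (1 - (finrank ℝ E : ℝ)⁻¹)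
  have hB_top : B ≠ ∞ :=
    ENNReal.rpow_ne_top_of_ne_zero (measure_closedBall_pos m x hr).ne'
      measure_closedBall_lt_top.ne
  calc C * (B * (ENNReal.ofReal η * m (closedBall z (κ * s))) ^ (finrank ℝ E : ℝ)⁻¹)
      = (C * ω * ENNReal.ofReal κ * ENNReal.ofReal η ^ (finrank ℝ E : ℝ)⁻¹) *
          (ENNReal.ofReal s * B) := by
        rw [ENNReal.mul_rpow_of_nonneg _ _ hq.le,
          addHaar_closedBall_rpow_inv_finrank m hn z (by positivity), ← hω,
          ENNReal.ofReal_mul hκ.le]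
        ring
    _ < (ENNReal.ofReal (c * ε ^ finrank ℝ F) * D) * (ENNReal.ofReal s * B) :=
        ENNReal.mul_lt_mul_left hsB (ENNReal.mul_ne_top ENNReal.ofReal_ne_top hB_top) hη
    _ = ENNReal.ofReal (c * s) * μ (closedBall a (ε * r)) := by
        rw [Measure.addHaar_closedBall_mul μ a hε.le hr.le, hD 0 x hr.le, ENNReal.ofReal_mul hc.le,
          ENNReal.ofReal_mul hc.le]
        ring

end Scaling

variable {E : Type*} [NormedAddCommGroup E] [InnerProductSpace ℝ E] [FiniteDimensional ℝ E]

theorem exists_submodule_finrank_add_one_eq (hE : 0 < finrank ℝ E) :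
    ∃ K : Submodule ℝ E, finrank ℝ E = finrank ℝ K + 1 := by
  obtain ⟨v, hv⟩ := Module.finrank_pos_iff_exists_ne_zero.1 hE
  refine ⟨(ℝ ∙ v)ᗮ, ?_⟩
  rw [← (ℝ ∙ v).finrank_add_finrank_orthogonal, finrank_span_singleton hv, add_comm]

variable [MeasurableSpace E] [BorelSpace E] {M : ℝ}

theorem exists_ofReal_mul_le_lintegral_of_dense {K : Submodule ℝ E} (hK : K ≠ ⊤) (μ : Measure K)
    (hM : 1 ≤ M) :
    ∃ ε > 0, ∃ σ > 0, ∀ {f : E → E} {δ : ℝ} {x q : E}, Continuous f →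
      WeaklyQuasisymmetricAt f M δ x → dist q x < δ →
      (∀ w ∈ closedBall (f x) (2 * M * dist (f q) (f x)),
        ∃ z, WeaklyQuasisymmetricAt f M δ z ∧ dist (f z) w < σ * dist (f q) (f x)) →
      ENNReal.ofReal (dist (f q) (f x) / (2 * M)) *
          μ (closedBall (K.orthogonalProjectionOnto x) (ε * dist q x)) ≤
        ∫⁻ a, μH[1] (f '' (K.orthogonalProjectionOnto ⁻¹' {a} ∩ closedBall x (dist q x))) ∂μ := by
  have : Nontrivial E := (Submodule.nontrivial_iff ℝ).1 ⟨K, ⊤, hK⟩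
  obtain ⟨ε, ⟨hε, hε1⟩, σ, hσ, hcontract⟩ :=
    WeaklyQuasisymmetricAt.exists_contraction (X := E) (E := E) hM
  refine ⟨ε, hε, σ, hσ, fun {f δ x q} hf hx hq hdense => ?_⟩
  refine le_of_eq_of_le ?_ (ofReal_sub_mul_le_lintegral_hausdorffMeasure_one hK μ hf
    (mul_le_of_le_one_left dist_nonneg hε1) (hcontract hx hq hdense)
    fun y => hx.div_le_dist (zero_lt_one.trans_le hM) hq)
  congr 2
  field_simp
  norm_num

theorem exists_mul_lt_measure_closedBall_sdiff (m : Measure E) [m.IsAddHaarMeasure]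
    (hE : 2 ≤ finrank ℝ E) (hM : 1 ≤ M) :
    ∃ κ > 0, ∃ η > 0, ∀ {f : E ≃ₜ E} {Z : Set E} {δ : ℝ} {x q : E},
      (∀ x, ∃ δ > 0, WeaklyQuasisymmetricAt f M δ x) → MeasurableSet Z → m Z = 0 →
      WeaklyQuasisymmetricAt f M δ x → dist q x < δ → q ≠ x →
      ∃ T, MeasurableSet T ∧ f '' (Z ∩ {x | WeaklyQuasisymmetricAt f M δ x}) ⊆ T ∧
        ENNReal.ofReal η * m (closedBall (f x) (κ * dist (f q) (f x))) <
          m (closedBall (f x) (κ * dist (f q) (f x)) \ T) := by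
  obtain ⟨K, hEK⟩ := exists_submodule_finrank_add_one_eq (E := E) (by lia)
  have hK : K ≠ ⊤ := fun h => by rw [h, finrank_top] at hEK; lia
  obtain ⟨C, hC⟩ := exists_lintegral_hausdorffMeasure_one_image_fibre_le m
    (volume : Measure K) hEK hE hM
  obtain ⟨ε, hε, σ, hσ, hlower⟩ :=
    exists_ofReal_mul_le_lintegral_of_dense hK (volume : Measure K) hM
  have hη_small : ∀ᶠ η in 𝓝[>] (0 : ℝ), η * (2 * M + σ) ^ finrank ℝ E < σ ^ finrank ℝ E :=
    (((continuous_mul_const _).tendsto' 0 0 (zero_mul _)).mono_left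
      nhdsWithin_le_nhds).eventually_lt_const (by positivity)
  obtain ⟨η, ⟨hη_lt, hη_dense⟩, hη⟩ := ((eventually_mul_rpow_mul_rpow_lt m (volume : Measure K)
    hEK C hε (κ := 2 * M + σ) (by positivity) (c := (2 * M)⁻¹) (by positivity)).and
    hη_small).and eventually_mem_nhdsWithin |>.exists
  refine ⟨2 * M + σ, by positivity, η, hη, fun {f Z δ x q} hW hZ hZ0 hx hqδ hqx => ?_⟩
  by_contra! hS
  have hs : 0 < dist (f q) (f x) := dist_pos.2 (f.injective.ne hqx)
  set s := dist (f q) (f x)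
  have hdense (w) (hw : w ∈ closedBall (f x) (2 * M * s)) :
      ∃ z, WeaklyQuasisymmetricAt f M δ z ∧ dist (f z) w < σ * s := by
    obtain ⟨_, ⟨z, ⟨-, hz⟩, rfl⟩, hzw⟩ := exists_mem_dist_lt_of_measure_sdiff_le m
      (z := f x) (w := w) (ρ := σ * s) hη.out.le (by positivity) (by positivity) hS
      (ball_subset_closedBall.trans (closedBall_subset_closedBall' (by linarith [hw.out])))
      (by rw [mul_pow, mul_pow, ← mul_assoc]; gcongr)
    exact ⟨z, hz, hzw⟩
  have hsmall : m (f '' (closedBall x (dist q x) \ Z)) ≤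
      ENNReal.ofReal η * m (closedBall (f x) ((2 * M + σ) * s)) := by
    refine (measure_mono ?_).trans (hS (f '' Z) (f.measurableEmbedding.measurableSet_image.2 hZ)
      (image_mono inter_subset_left))
    rw [image_sdiff f.injective]
    exact sdiff_subset_sdiff_left ((hx.image_closedBall_subset hqδ).trans
      (closedBall_subset_closedBall (by gcongr; linarith)))
  refine (hη_lt x (f x) (K.orthogonalProjectionOnto x) (dist_pos.2 hqx) hs).not_ge ?_
  rw [inv_mul_eq_div]
  refine (hlower f.continuous hx hqδ hdense).trans
    ((hC K.lipschitzWith_orthogonalProjectionOnto hW measure_closedBall_lt_top.ne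
      ((isCompact_closedBall x _).image f.continuous).measure_ne_top hZ0).trans ?_)
  gcongr

-- Otherwise some point `f x` of the image is a density point, so near `f x` the image is dense and
-- its complement negligible. Density forces `f` to stretch the fibres of a projection that pass
-- near `x`, whereas the coarea-type inequality bounds their total length by the complement.
theorem measure_image_inter_weaklyQuasisymmetricAt_eq_zero (m : Measure E) [m.IsAddHaarMeasure]
    (hE : 2 ≤ finrank ℝ E) {f : E ≃ₜ E} (hM : 1 ≤ M)
    (hW : ∀ x, ∃ δ > 0, WeaklyQuasisymmetricAt f M δ x) {Z : Set E} (hZ : MeasurableSet Z)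
    (hZ0 : m Z = 0) {δ : ℝ} (hδ : 0 < δ) :
    m (f '' (Z ∩ {x | WeaklyQuasisymmetricAt f M δ x})) = 0 := by
  by_contra hS
  have : Nontrivial E := Module.nontrivial_of_finrank_pos (R := ℝ) (by lia)
  obtain ⟨κ, hκ, η, hη, hnot_dense⟩ := exists_mul_lt_measure_closedBall_sdiff m hE hM
  obtain ⟨_, ⟨x, ⟨-, hx⟩, rfl⟩, hdensity⟩ := exists_mem_density_of_measure_ne_zero hS
  have hR : Tendsto (fun q => κ * dist (f q) (f x)) (𝓝[≠] x) (𝓝[>] 0) := by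
    refine tendsto_nhdsWithin_iff.2 ⟨?_, eventually_mem_nhdsWithin.mono fun q hq => ?_⟩
    · refine (Continuous.tendsto' ?_ x 0 (by rw [dist_self, mul_zero])).mono_left
        nhdsWithin_le_nhds
      exact continuous_const.mul (f.continuous.dist continuous_const)
    · have := dist_pos.2 (f.injective.ne hq)
      exact mem_Ioi.2 (by positivity)
  obtain ⟨q, ⟨hq, hqδ⟩, hqx⟩ := ((hR.eventually (hdensity (ENNReal.ofReal η)
    (ENNReal.ofReal_pos.2 hη).ne')).and (eventually_nhdsWithin_of_eventually_nhds
      (ball_mem_nhds x hδ))).and eventually_mem_nhdsWithin |>.exists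
  obtain ⟨T, hT, hsub, hlt⟩ := hnot_dense hW hZ hZ0 hx hqδ hqx
  exact hlt.not_ge (hq T hT hsub)

theorem measure_image_eq_zero_of_weaklyQuasisymmetricAt (m : Measure E) [m.IsAddHaarMeasure]
    (hE : 2 ≤ finrank ℝ E) {f : E ≃ₜ E} (hM : 1 ≤ M)
    (hW : ∀ x, ∃ δ > 0, WeaklyQuasisymmetricAt f M δ x) {Z : Set E} (hZ : m Z = 0) :
    m (f '' Z) = 0 := by
  have hcover : f '' Z ⊆ ⋃ k : ℕ, f '' (toMeasurable m Z ∩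
      {x | WeaklyQuasisymmetricAt f M (1 / (k + 1)) x}) := by
    rintro _ ⟨x, hx, rfl⟩
    obtain ⟨δ, hδ, hxδ⟩ := hW x
    obtain ⟨k, hk⟩ := exists_nat_one_div_lt hδ
    exact mem_iUnion.2 ⟨k, mem_image_of_mem f ⟨subset_toMeasurable m Z hx, hxδ.mono hk.le⟩⟩
  refine measure_mono_null hcover (measure_iUnion_null fun k => ?_)
  exact measure_image_inter_weaklyQuasisymmetricAt_eq_zero m hE hM hW
    (measurableSet_toMeasurable m Z) ((measure_toMeasurable Z).trans hZ) (by positivity)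

end LusinN

section SeparatedSets

theorem exists_finset_pairwise_lt_dist_covering {X : Type*} [PseudoMetricSpace X] {D : Set X}
    (hD : TotallyBounded D) {r : ℝ} (hr : 0 < r) :
    ∃ t : Finset X, ↑t ⊆ D ∧ (t : Set X).Pairwise (r < dist · ·) ∧
      D ⊆ ⋃ x ∈ t, closedBall x r := by
  lift r to ℝ≥0 using hr.le
  have hpack : packingNumber r D ≠ ⊤ := by
    obtain ⟨N, hND, hN, hcov⟩ := exists_finite_isCover_of_totallyBounded
      (half_pos (NNReal.coe_pos.1 hr)).ne' hD
    have hle := (packingNumber_two_mul_le_externalCoveringNumber (r / 2) D).trans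
      ((externalCoveringNumber_le_coveringNumber _ _).trans (hcov.coveringNumber_le_encard hND))
    rw [mul_div_cancel₀ _ two_ne_zero] at hle
    exact (hle.trans_lt hN.encard_lt_top).ne
  have hfin : (maximalSeparatedSet r D).Finite := by
    rw [← Set.encard_ne_top_iff, encard_maximalSeparatedSet hpack]
    exact hpack
  refine ⟨hfin.toFinset, ?_, ?_, ?_⟩
  · rw [hfin.coe_toFinset]
    exact maximalSeparatedSet_subset
  · rw [hfin.coe_toFinset]
    refine isSeparated_maximalSeparatedSet.mono' fun x y hxy => ?_
    rwa [edist_nndist, ENNReal.coe_lt_coe, ← NNReal.coe_lt_coe, coe_nndist] at hxy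
  · simpa only [Set.Finite.mem_toFinset] using
      (isCover_maximalSeparatedSet hpack).subset_iUnion_closedBall

theorem card_mul_pow_finrank_le_of_pairwise_le_dist {V : Type*} [NormedAddCommGroup V]
    [NormedSpace ℝ V] [FiniteDimensional ℝ V] {ι : Type*} {s : Finset ι} {c : ι → V} {x : V}
    {r R : ℝ} (hr : 0 < r) (hR : 0 ≤ R)
    (hsep : (s : Set ι).Pairwise fun i j => r ≤ dist (c i) (c j))
    (hs : ∀ i ∈ s, dist (c i) x ≤ R) :
    s.card * r ^ finrank ℝ V ≤ (2 * R + r) ^ finrank ℝ V := by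
  borelize V
  let μ : Measure V := Measure.addHaar
  have hdisj : (s : Set ι).PairwiseDisjoint fun i => ball (c i) (r / 2) :=
    hsep.mono' fun i j hij => ball_disjoint_ball (by linarith)
  have hsub : ⋃ i ∈ s, ball (c i) (r / 2) ⊆ ball x ((2 * R + r) / 2) :=
    iUnion₂_subset fun i hi => ball_subset_ball' (by linarith [hs i hi])
  have hvol := measure_mono (μ := μ) hsub
  rw [measure_biUnion_finset hdisj fun _ _ => measurableSet_ball,
    Finset.sum_congr rfl fun i _ => μ.addHaar_ball_of_pos (c i) (half_pos hr), Finset.sum_const,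
    nsmul_eq_mul, μ.addHaar_ball_of_pos x (by positivity), ← mul_assoc,
    ENNReal.mul_le_mul_iff_left (measure_ball_pos μ 0 one_pos).ne' measure_ball_lt_top.ne,
    ← ENNReal.ofReal_natCast, ← ENNReal.ofReal_mul (Nat.cast_nonneg _),
    ENNReal.ofReal_le_ofReal_iff (by positivity), div_pow, div_pow, ← mul_div_assoc,
    div_le_div_iff_of_pos_right (by positivity)] at hvol
  exact hvol

theorem card_le_three_pow_finrank_of_pairwise_le_dist {V : Type*} [NormedAddCommGroup V]
    [NormedSpace ℝ V] [FiniteDimensional ℝ V] {s : Finset V} {x : V} {r : ℝ} (hr : 0 < r)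
    (hsep : (s : Set V).Pairwise (r ≤ dist · ·)) (hs : ∀ y ∈ s, dist y x ≤ r) :
    s.card ≤ 3 ^ finrank ℝ V := by
  have hcard := card_mul_pow_finrank_le_of_pairwise_le_dist (c := id) hr hr.le hsep hs
  rw [show 2 * r + r = 3 * r by ring, mul_pow, mul_le_mul_iff_left₀ (by positivity)] at hcard
  exact_mod_cast hcard

theorem sum_measure_le_mul_of_forall_card_le {X ι : Type*} [MeasurableSpace X] {μ : Measure X}
    {t : Finset ι} {A : ι → Set X} {T : Set X} {N : ℕ} (hA : ∀ i ∈ t, MeasurableSet (A i))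
    (hT : ∀ i ∈ t, A i ⊆ T) (hN : ∀ y, ∀ s ⊆ t, (∀ i ∈ s, y ∈ A i) → s.card ≤ N) :
    ∑ i ∈ t, μ (A i) ≤ N * μ T := by
  classical
  have hcount (y : X) : ∑ i ∈ t, (A i).indicator 1 y ≤ T.indicator (fun _ => (N : ℝ≥0∞)) y := by
    simp only [indicator_apply, Pi.one_apply, Finset.sum_boole]
    split_ifs with hy
    · exact_mod_cast hN y _ (Finset.filter_subset _ t) fun i hi => (Finset.mem_filter.1 hi).2
    · rw [Finset.filter_false_of_mem fun i hi hyi => hy (hT i hi hyi)]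
      exact Nat.cast_zero.le
  calc ∑ i ∈ t, μ (A i) = ∑ i ∈ t, ∫⁻ y, (A i).indicator 1 y ∂μ :=
        Finset.sum_congr rfl fun i hi => (lintegral_indicator_one (hA i hi)).symm
    _ = ∫⁻ y, ∑ i ∈ t, (A i).indicator 1 y ∂μ :=
        (lintegral_finsetSum' t fun i hi =>
          (measurable_one.indicator (hA i hi)).aemeasurable).symm
    _ ≤ ∫⁻ y, T.indicator (fun _ => (N : ℝ≥0∞)) y ∂μ := lintegral_mono hcount
    _ ≤ N * μ T := lintegral_indicator_const_le _ _

end SeparatedSets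

section FibreCovering

variable {E : Type*} [NormedAddCommGroup E] [InnerProductSpace ℝ E] [FiniteDimensional ℝ E]
  (L : Submodule ℝ E)

theorem dist_orthogonalProjectionOnto_eq {x y : E}
    (hxy : Lᗮ.orthogonalProjectionOnto x = Lᗮ.orthogonalProjectionOnto y) :
    dist (L.orthogonalProjectionOnto x) (L.orthogonalProjectionOnto y) = dist x y := by
  have hL : x - y ∈ L := by
    rw [← L.orthogonal_orthogonal, ← Submodule.orthogonalProjectionOnto_eq_zero_iff, map_sub, hxy,
      sub_self]
  rw [dist_eq_norm, ← map_sub, L.norm_orthogonalProjectionOnto_apply hL, dist_eq_norm]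

theorem exists_finset_fibre_covering {D : Set E} {a : Lᗮ} {r R : ℝ} (hr : 0 < r) (hR : 0 ≤ R)
    (hD : D ⊆ Lᗮ.orthogonalProjectionOnto ⁻¹' {a} ∩ closedBall 0 R) :
    ∃ t : Finset E, ↑t ⊆ D ∧ D ⊆ ⋃ x ∈ t, closedBall x r ∧
      t.card * r ^ finrank ℝ L ≤ (2 * R + r) ^ finrank ℝ L ∧
      ∀ y, ∀ s ⊆ t, (∀ x ∈ s, y ∈ closedBall x r) → s.card ≤ 3 ^ finrank ℝ E := by
  obtain ⟨t, htD, hsep, hcov⟩ := exists_finset_pairwise_lt_dist_covering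
    ((isCompact_closedBall (0 : E) R).totallyBounded.subset (hD.trans inter_subset_right)) hr
  refine ⟨t, htD, hcov, ?_, fun y s hst hys => ?_⟩
  · refine card_mul_pow_finrank_le_of_pairwise_le_dist (c := L.orthogonalProjectionOnto) (x := 0)
      hr hR (fun x hx y hy hxy => ?_) fun x hx => ?_
    · exact (hsep hx hy hxy).le.trans_eq (dist_orthogonalProjectionOnto_eq L
        ((hD (htD hx)).1.trans (hD (htD hy)).1.symm)).symm
    · rw [dist_zero_right]
      exact (L.norm_orthogonalProjectionOnto_apply_le x).trans
        (mem_closedBall_zero_iff.1 (hD (htD hx)).2)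
  · exact card_le_three_pow_finrank_of_pairwise_le_dist hr
      ((hsep.mono (Finset.coe_subset.2 hst)).mono' fun _ _ => le_of_lt)
      fun x hx => (dist_comm x y).trans_le (hys x hx)

end FibreCovering

section FibreImage

theorem hausdorffMeasure_eq_zero_of_forall_exists_sum_le {X : Type*} [EMetricSpace X]
    [MeasurableSpace X] [BorelSpace X] {ι : Type*} {α : ℝ} (hα : 0 < α) {A : Set X}
    (hA : ∀ ε : ℝ≥0∞, ε ≠ 0 → ∃ (t : Finset ι) (s : ι → Set X),
      A ⊆ ⋃ i ∈ t, s i ∧ ∑ i ∈ t, ediam (s i) ^ α ≤ ε) :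
    μH[α] A = 0 := by
  choose t s hcov hsum using fun j : ℕ => hA (j : ℝ≥0∞)⁻¹ (by simp)
  have hlim : Tendsto (fun j : ℕ => (j : ℝ≥0∞)⁻¹ ^ α⁻¹) atTop (𝓝 0) := by
    simpa only [ENNReal.zero_rpow_of_pos (inv_pos.2 hα)]
      using ENNReal.tendsto_inv_nat_nhds_zero.ennrpow_const α⁻¹
  have hdiam (j : ℕ) (i : t j) : ediam (s j i) ≤ (j : ℝ≥0∞)⁻¹ ^ α⁻¹ := by
    rw [ENNReal.le_rpow_inv_iff hα]
    exact (Finset.single_le_sum (f := fun i => ediam (s j i) ^ α) (fun _ _ => zero_le) i.2).trans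
      (hsum j)
  have hle := Measure.hausdorffMeasure_le_liminf_sum α A (fun j : ℕ => (j : ℝ≥0∞)⁻¹ ^ α⁻¹) hlim
    (fun j (i : t j) => s j i) (.of_forall hdiam) (.of_forall fun j => by
      simpa only [iUnion_subtype] using hcov j)
  refine le_antisymm (hle.trans ?_) zero_le
  rw [← ENNReal.tendsto_inv_nat_nhds_zero.liminf_eq]
  refine liminf_le_liminf (.of_forall fun j => ?_)
  rw [Finset.sum_coe_sort (t j) fun i => ediam (s j i) ^ α]
  exact hsum j

theorem closedBall_subset_preimage_closedBall_inter_closedBall {E : Type*}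
    [NormedAddCommGroup E] [InnerProductSpace ℝ E] (L : Submodule ℝ E)
    [Lᗮ.HasOrthogonalProjection] {a : Lᗮ} {x : E} {r ρ R : ℝ} (hr : r ≤ ρ)
    (hx : x ∈ Lᗮ.orthogonalProjectionOnto ⁻¹' {a} ∩ closedBall 0 R) :
    closedBall x r ⊆ Lᗮ.orthogonalProjectionOnto ⁻¹' closedBall a r ∩ closedBall 0 (R + ρ) := by
  obtain ⟨hxa, hxR⟩ := hx
  refine subset_inter (fun y hy => ?_) (closedBall_subset_closedBall' ?_)
  · rw [mem_preimage, mem_closedBall, ← hxa, dist_eq_norm, ← map_sub]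
    exact (Lᗮ.norm_orthogonalProjectionOnto_apply_le _).trans (mem_closedBall_iff_norm.1 hy)
  · linarith [mem_closedBall.1 hxR]

variable {E : Type*} [NormedAddCommGroup E] [InnerProductSpace ℝ E] [FiniteDimensional ℝ E]
  [Nontrivial E] [MeasurableSpace E] [BorelSpace E] (m : Measure E) [m.IsAddHaarMeasure] {M : ℝ}
  (L : Submodule ℝ E) {α : ℝ}

theorem exists_fibre_covering_rpow_mul_sum_ediam_image_le (hM : 1 ≤ M) (hα₀ : 0 < α)
    (hα : α ≤ finrank ℝ E) {R : ℝ} (hR : 0 ≤ R) :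
    ∃ Q : ℝ≥0∞, Q ≠ ∞ ∧ ∀ (f : E ≃ₜ E) {δ r : ℝ} (a : Lᗮ), 0 < r → r < δ → r ≤ 1 →
      ∃ t : Finset E,
        Lᗮ.orthogonalProjectionOnto ⁻¹' {a} ∩ closedBall 0 R ∩
          {x | WeaklyQuasisymmetricAt f M δ x} ⊆ ⋃ x ∈ t, closedBall x r ∧
        ENNReal.ofReal r ^ (finrank ℝ L * (finrank ℝ E / α - 1)) *
            (∑ x ∈ t, ediam (f '' closedBall x r) ^ α) ^ (finrank ℝ E / α) ≤
          Q * pullbackMeasure f m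
            (Lᗮ.orthogonalProjectionOnto ⁻¹' closedBall a r ∩ closedBall 0 (R + 1)) := by
  set n := finrank ℝ E
  set p : ℝ := n / α
  have hp : 0 ≤ p - 1 := sub_nonneg.2 ((one_le_div hα₀).2 hα)
  obtain ⟨C, hC⟩ := exists_ediam_image_closedBall_pow_le (X := E) m hM
  refine ⟨(ENNReal.ofReal (2 * R + 1) ^ finrank ℝ L) ^ (p - 1) * (C * (3 ^ n : ℕ)), by finiteness,
    fun f δ r a hr hrδ hr₁ => ?_⟩
  obtain ⟨t, htD, hcov, hcard, hmult⟩ := exists_finset_fibre_covering L hr hR inter_subset_left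
  refine ⟨t, hcov, ?_⟩
  have hcard' : ENNReal.ofReal r ^ finrank ℝ L * t.card ≤
      ENNReal.ofReal (2 * R + 1) ^ finrank ℝ L := by
    rw [← ENNReal.ofReal_pow hr.le, ← ENNReal.ofReal_pow (by positivity), ← ENNReal.ofReal_natCast,
      ← ENNReal.ofReal_mul (by positivity), mul_comm]
    exact ENNReal.ofReal_le_ofReal (hcard.trans (by gcongr))
  calc ENNReal.ofReal r ^ (finrank ℝ L * (p - 1)) *
        (∑ x ∈ t, ediam (f '' closedBall x r) ^ α) ^ p
      ≤ ENNReal.ofReal r ^ (finrank ℝ L * (p - 1)) *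
        (t.card ^ (p - 1) * ∑ x ∈ t, (ediam (f '' closedBall x r) ^ α) ^ p) := by
        gcongr
        exact ENNReal.rpow_sum_le_const_mul_sum_rpow _ _ (sub_nonneg.1 hp)
    _ = (ENNReal.ofReal r ^ finrank ℝ L * t.card) ^ (p - 1) *
        ∑ x ∈ t, ediam (f '' closedBall x r) ^ n := by
        simp only [← ENNReal.rpow_mul, p, mul_div_cancel₀ _ hα₀.ne', ENNReal.rpow_natCast]
        rw [ENNReal.rpow_mul, ENNReal.rpow_natCast, ← mul_assoc,
          ENNReal.mul_rpow_of_nonneg _ _ hp]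
    _ ≤ (ENNReal.ofReal (2 * R + 1) ^ finrank ℝ L) ^ (p - 1) *
        ∑ x ∈ t, C * pullbackMeasure f m (closedBall x r) := by
        gcongr with x hx
        exact hC f (htD hx).2 hr.le hrδ
    _ ≤ (ENNReal.ofReal (2 * R + 1) ^ finrank ℝ L) ^ (p - 1) * (C * ((3 ^ n : ℕ) *
        pullbackMeasure f m
          (Lᗮ.orthogonalProjectionOnto ⁻¹' closedBall a r ∩ closedBall 0 (R + 1)))) := by
        rw [← Finset.mul_sum]
        gcongr
        exact sum_measure_le_mul_of_forall_card_le (fun _ _ => measurableSet_closedBall)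
          (fun x hx => closedBall_subset_preimage_closedBall_inter_closedBall L hr₁ (htD hx).1)
          hmult
    _ = _ := by simp only [mul_assoc]

theorem hausdorffMeasure_image_fibre_eq_zero_of_frequently_lt (hM : 1 ≤ M) (hα₀ : 0 < α)
    (hα : α ≤ finrank ℝ E) {R δ : ℝ} (hR : 0 ≤ R) (hδ : 0 < δ) {f : E ≃ₜ E} {a : Lᗮ}
    (ha : ∀ K : ℕ, ∃ᶠ r in 𝓝[>] 0, K * pullbackMeasure f m
        (Lᗮ.orthogonalProjectionOnto ⁻¹' closedBall a r ∩ closedBall 0 (R + 1)) <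
      ENNReal.ofReal r ^ (finrank ℝ L * (finrank ℝ E / α - 1))) :
    μH[α] (f '' (Lᗮ.orthogonalProjectionOnto ⁻¹' {a} ∩ closedBall 0 R ∩
      {x | WeaklyQuasisymmetricAt f M δ x})) = 0 := by
  obtain ⟨Q, hQ, hcov⟩ := exists_fibre_covering_rpow_mul_sum_ediam_image_le m L hM hα₀ hα hR
  set p : ℝ := finrank ℝ E / α
  have hp : 0 < p := div_pos (hα₀.trans_le hα) hα₀
  refine hausdorffMeasure_eq_zero_of_forall_exists_sum_le (ι := E) hα₀ fun ε hε => ?_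
  have hεp : ε ^ p ≠ 0 := (ENNReal.rpow_pos_of_nonneg (pos_iff_ne_zero.2 hε) hp.le).ne'
  obtain ⟨K, hK⟩ := ENNReal.exists_nat_gt (ENNReal.div_ne_top hQ hεp)
  have hsmall : ∀ᶠ r : ℝ in 𝓝[>] 0, 0 < r ∧ r < min δ 1 :=
    Ioo_mem_nhdsGT (lt_min hδ one_pos)
  obtain ⟨r, hνr, hr, hr'⟩ := ((ha K).and_eventually hsmall).exists
  obtain ⟨hrδ, hr₁⟩ := lt_min_iff.1 hr'
  obtain ⟨t, hcov_t, hsum_t⟩ := hcov f a hr hrδ hr₁.le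
  refine ⟨t, fun x => f '' closedBall x r, ?_, ?_⟩
  · simpa only [image_iUnion] using image_mono (f := f) hcov_t
  have hQK : Q ≤ ε ^ p * K := by
    rw [mul_comm]
    exact (ENNReal.div_le_iff_le_mul (.inl hεp) (.inr (ne_bot_of_gt hK))).1 hK.le
  have hrp : ENNReal.ofReal r ^ (finrank ℝ L * (p - 1)) ≠ 0 :=
    (ENNReal.rpow_pos (ENNReal.ofReal_pos.2 hr) ENNReal.ofReal_ne_top).ne'
  rw [← ENNReal.rpow_le_rpow_iff hp, ← ENNReal.mul_le_mul_iff_right hrp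
    (ENNReal.rpow_ne_top_of_ne_zero (ENNReal.ofReal_pos.2 hr).ne' ENNReal.ofReal_ne_top)]
  calc _ ≤ Q * _ := hsum_t
    _ ≤ ε ^ p * K * _ := by gcongr
    _ ≤ ε ^ p * ENNReal.ofReal r ^ (finrank ℝ L * (p - 1)) := by
      rw [mul_assoc]
      gcongr
    _ = _ := mul_comm _ _

end FibreImage

section HausdorffComparison

variable {X : Type*} [MetricSpace X] [SecondCountableTopology X] [HasBesicovitchCovering X]
  [MeasurableSpace X] [BorelSpace X] (μ : Measure X) {β : ℝ} {K : ℝ≥0∞} {A : Set X}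

theorem exists_closedBall_covering_tsum_ediam_rpow_le [SFinite μ] [μ.OuterRegular] (hβ : 0 ≤ β)
    (hA : ∀ a ∈ A, ∃ᶠ r in 𝓝[>] 0, ENNReal.ofReal r ^ β ≤ K * μ (closedBall a r)) {η : ℝ}
    (hη : 0 < η) :
    ∃ (t : Set X) (r : X → ℝ), t.Countable ∧ A ⊆ ⋃ x ∈ t, closedBall x (r x) ∧
      (∀ x ∈ t, ediam (closedBall x (r x)) ≤ ENNReal.ofReal (2 * η)) ∧
      ∑' x : t, ediam (closedBall (x : X) (r x)) ^ β ≤ 2 ^ β * K * (μ A + ENNReal.ofReal η) := by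
  obtain ⟨t, r, ht, -, hr, hAt, hsum⟩ := Besicovitch.exists_closedBall_covering_tsum_measure_le μ
    (ENNReal.ofReal_pos.2 hη).ne'
    (fun x => {r | 0 < r ∧ r < η ∧ ENNReal.ofReal r ^ β ≤ K * μ (closedBall x r)}) A
    fun x hx δ hδ => by
      have hsmall : ∀ᶠ r : ℝ in 𝓝[>] 0, 0 < r ∧ r < min δ η := Ioo_mem_nhdsGT (lt_min hδ hη)
      obtain ⟨r, hr, hr₀, hrδη⟩ := ((hA x hx).and_eventually hsmall).exists
      obtain ⟨hrδ, hrη⟩ := lt_min_iff.1 hrδη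
      exact ⟨r, ⟨hr₀, hrη, hr⟩, hr₀, hrδ⟩
  have hdiam (x : X) (hx : x ∈ t) : ediam (closedBall x (r x)) ≤ ENNReal.ofReal (2 * r x) :=
    ediam_closedBall_le x (hr x hx).1.le
  refine ⟨t, r, ht, hAt, fun x hx => (hdiam x hx).trans ?_, ?_⟩
  · exact ENNReal.ofReal_le_ofReal (by linarith [(hr x hx).2.1])
  calc ∑' x : t, ediam (closedBall (x : X) (r x)) ^ β
      ≤ ∑' x : t, 2 ^ β * K * μ (closedBall (x : X) (r x)) := by
        refine ENNReal.tsum_le_tsum fun x => ?_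
        calc ediam (closedBall (x : X) (r x)) ^ β ≤ ENNReal.ofReal (2 * r x) ^ β := by
              gcongr
              exact hdiam x x.2
          _ = 2 ^ β * ENNReal.ofReal (r x) ^ β := by
              rw [ENNReal.ofReal_mul zero_le_two, ENNReal.ofReal_ofNat,
                ENNReal.mul_rpow_of_nonneg _ _ hβ]
          _ ≤ 2 ^ β * K * μ (closedBall (x : X) (r x)) := by
              rw [mul_assoc]
              gcongr
              exact (hr x x.2).2.2
    _ = 2 ^ β * K * ∑' x : t, μ (closedBall (x : X) (r x)) := ENNReal.tsum_mul_left
    _ ≤ 2 ^ β * K * (μ A + ENNReal.ofReal η) := by gcongr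

theorem hausdorffMeasure_le_of_frequently_rpow_le [SFinite μ] [μ.OuterRegular] (hβ : 0 ≤ β)
    (hK : K ≠ ∞)
    (hA : ∀ a ∈ A, ∃ᶠ r in 𝓝[>] 0, ENNReal.ofReal r ^ β ≤ K * μ (closedBall a r)) :
    μH[β] A ≤ 2 ^ β * K * μ A := by
  choose t r ht hAt hdiam hsum using fun j : ℕ =>
    exists_closedBall_covering_tsum_ediam_rpow_le μ hβ hA (η := 1 / (j + 1)) Nat.one_div_pos_of_nat
  have (j : ℕ) : Countable (t j) := (ht j).to_subtype
  have hη : Tendsto (fun j : ℕ => 1 / ((j : ℝ) + 1)) atTop (𝓝 0) :=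
    tendsto_one_div_add_atTop_nhds_zero_nat
  have hη_diam : Tendsto (fun j : ℕ => ENNReal.ofReal (2 * (1 / ((j : ℝ) + 1)))) atTop (𝓝 0) := by
    simpa only [mul_zero, ENNReal.ofReal_zero] using ENNReal.tendsto_ofReal (hη.const_mul 2)
  have hη_sum : Tendsto (fun j : ℕ => 2 ^ β * K * (μ A + ENNReal.ofReal (1 / ((j : ℝ) + 1)))) atTop
      (𝓝 (2 ^ β * K * μ A)) := by
    simpa only [ENNReal.ofReal_zero, add_zero] using
      ENNReal.Tendsto.const_mul (tendsto_const_nhds.add (ENNReal.tendsto_ofReal hη))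
        (.inr (by finiteness))
  refine (Measure.hausdorffMeasure_le_liminf_tsum β A _ hη_diam
    (fun j (x : t j) => closedBall (x : X) (r j x)) (.of_forall fun j x => hdiam j x x.2)
    (.of_forall fun j => by simpa only [iUnion_subtype] using hAt j)).trans ?_
  rw [← hη_sum.liminf_eq]
  exact liminf_le_liminf (.of_forall hsum)

theorem hausdorffMeasure_eq_zero_of_frequently_rpow_le [IsFiniteMeasure μ] {d : ℝ} (hβ : 0 ≤ β)
    (hβd : β < d) (hμ : μ ≪ μH[d]) (hK : K ≠ ∞)
    (hA : ∀ a ∈ A, ∃ᶠ r in 𝓝[>] 0, ENNReal.ofReal r ^ β ≤ K * μ (closedBall a r)) :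
    μH[β] A = 0 := by
  have hle := hausdorffMeasure_le_of_frequently_rpow_le μ hβ hK hA
  have hfin : μH[β] A ≠ ∞ := ne_top_of_le_ne_top (by finiteness) hle
  have hμA : μ A = 0 := hμ ((Measure.hausdorffMeasure_zero_or_top hβd A).resolve_right hfin)
  rwa [hμA, mul_zero, nonpos_iff_eq_zero] at hle

end HausdorffComparison

section ProjectedImageMeasure

variable {E : Type*} [NormedAddCommGroup E] [InnerProductSpace ℝ E] [FiniteDimensional ℝ E]
  [MeasurableSpace E] [BorelSpace E] (L : Submodule ℝ E) (f : E ≃ₜ E) (m : Measure E) (R : ℝ)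

/-- The measure `S ↦ m (f (P⁻¹ S ∩ B))` on `Lᗮ`, where `P` is the orthogonal projection onto `Lᗮ`
and `B` is the closed ball of radius `R` about `0`. Cutting down to `B` makes it finite. -/
noncomputable def projectedImageMeasure : Measure Lᗮ :=
  ((pullbackMeasure f m).restrict (closedBall 0 R)).map Lᗮ.orthogonalProjectionOnto

variable {L f m R}

theorem projectedImageMeasure_apply {S : Set Lᗮ} (hS : MeasurableSet S) :
    projectedImageMeasure L f m R S =
      pullbackMeasure f m (Lᗮ.orthogonalProjectionOnto ⁻¹' S ∩ closedBall 0 R) := by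
  rw [projectedImageMeasure, Measure.map_apply Lᗮ.orthogonalProjectionOnto.measurable hS,
    Measure.restrict_apply (Lᗮ.orthogonalProjectionOnto.measurable hS)]

instance [IsFiniteMeasureOnCompacts m] : IsFiniteMeasure (projectedImageMeasure L f m R) := by
  have : IsFiniteMeasure ((pullbackMeasure f m).restrict (closedBall 0 R)) :=
    ⟨by simpa only [Measure.restrict_apply_univ] using (isCompact_closedBall _ _).measure_lt_top⟩
  exact Measure.isFiniteMeasure_map _ _

theorem projectedImageMeasure_absolutelyContinuous [m.IsAddHaarMeasure] (hE : 2 ≤ finrank ℝ E)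
    {M : ℝ} (hM : 1 ≤ M) (hf : ∀ x, ∃ δ > 0, WeaklyQuasisymmetricAt f M δ x) :
    projectedImageMeasure L f m R ≪ μH[finrank ℝ Lᗮ] := by
  refine Measure.AbsolutelyContinuous.mk fun S hS hS₀ => ?_
  obtain ⟨c, -, hc⟩ := (Lᗮ.orthogonalProjectionOnto : E →ₗ[ℝ] Lᗮ).exists_map_addHaar_eq_smul_addHaar
    m μH[finrank ℝ Lᗮ] fun b => ⟨b, Submodule.orthogonalProjectionOnto_mem_subspace_eq_self b⟩
  have hnull : m (Lᗮ.orthogonalProjectionOnto ⁻¹' S) = 0 := by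
    rw [← Measure.map_apply Lᗮ.orthogonalProjectionOnto.measurable hS]
    refine (congrArg (· S) hc).trans ?_
    simp only [Measure.smul_apply, hS₀, smul_zero]
  rw [projectedImageMeasure_apply hS]
  refine measure_mono_null inter_subset_left ?_
  rw [pullbackMeasure_apply]
  exact measure_image_eq_zero_of_weaklyQuasisymmetricAt m hE hM hf hnull

end ProjectedImageMeasure

section LineDistortion

variable {E : Type*} [NormedAddCommGroup E] [InnerProductSpace ℝ E] [FiniteDimensional ℝ E]
  (L : Submodule ℝ E)

theorem setOf_exists_mem_eq_add_eq_preimage_orthogonalProjectionOnto (a : Lᗮ) :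
    {x | ∃ v ∈ L, x = a + v} = Lᗮ.orthogonalProjectionOnto ⁻¹' {a} := by
  ext x
  have hx := Submodule.orthogonalProjectionOnto_eq_zero_iff (K := Lᗮ) (v := x - a)
  rw [L.orthogonal_orthogonal, map_sub, Submodule.orthogonalProjectionOnto_mem_subspace_eq_self,
    sub_eq_zero] at hx
  rw [mem_preimage, mem_singleton_iff, hx]
  refine ⟨fun ⟨v, hv, hxv⟩ => by rwa [hxv, add_sub_cancel_left], fun h => ⟨x - a, h, ?_⟩⟩
  exact (add_sub_cancel _ _).symm

theorem finrank_mul_finrank_div_sub_one_lt_finrank_orthogonal {α : ℝ} (hE : 0 < finrank ℝ E)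
    (hα : finrank ℝ L < α) : finrank ℝ L * (finrank ℝ E / α - 1) < finrank ℝ Lᗮ := by
  have hα₀ : 0 < α := (Nat.cast_nonneg _).trans_lt hα
  have hsum : (finrank ℝ L + finrank ℝ Lᗮ : ℝ) = finrank ℝ E := by
    exact_mod_cast L.finrank_add_finrank_orthogonal
  calc finrank ℝ L * (finrank ℝ E / α - 1)
      = finrank ℝ L / α * finrank ℝ E - finrank ℝ L := by ring
    _ < 1 * finrank ℝ E - finrank ℝ L := by
        gcongr
        exact (div_lt_one hα₀).2 hα
    _ = finrank ℝ Lᗮ := by rw [one_mul, ← hsum, add_sub_cancel_left]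

variable [MeasurableSpace E] [BorelSpace E] {f : E ≃ₜ E} {M α : ℝ}

theorem exists_eventually_rpow_le_projectedImageMeasure [Nontrivial E] (m : Measure E)
    [m.IsAddHaarMeasure] (hM : 1 ≤ M) (hf : ∀ x, ∃ δ > 0, WeaklyQuasisymmetricAt f M δ x)
    (hα₀ : 0 < α) (hα : α ≤ finrank ℝ E) {a : Lᗮ}
    (ha : μH[α] (f '' (Lᗮ.orthogonalProjectionOnto ⁻¹' {a})) ≠ 0) :
    ∃ R K : ℕ, ∀ᶠ r in 𝓝[>] 0,
      ENNReal.ofReal r ^ (finrank ℝ L * (finrank ℝ E / α - 1)) ≤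
        K * projectedImageMeasure L f m (R + 1) (closedBall a r) := by
  contrapose! ha
  have hcover : Lᗮ.orthogonalProjectionOnto ⁻¹' {a} ⊆ ⋃ (k : ℕ) (R : ℕ),
      Lᗮ.orthogonalProjectionOnto ⁻¹' {a} ∩ closedBall 0 R ∩
        {x | WeaklyQuasisymmetricAt f M (1 / (k + 1)) x} := by
    intro x hx
    obtain ⟨δ, hδ, hxδ⟩ := hf x
    obtain ⟨k, hk⟩ := exists_nat_one_div_lt hδ
    obtain ⟨R, hR⟩ := exists_nat_ge ‖x‖
    exact mem_iUnion₂.2 ⟨k, R, ⟨hx, mem_closedBall_zero_iff.2 hR⟩, hxδ.mono hk.le⟩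
  refine measure_mono_null (image_mono hcover) ?_
  rw [image_iUnion₂]
  refine measure_iUnion_null fun k => measure_iUnion_null fun R => ?_
  refine hausdorffMeasure_image_fibre_eq_zero_of_frequently_lt m L hM hα₀ hα R.cast_nonneg
    Nat.one_div_pos_of_nat fun K => ?_
  simpa only [projectedImageMeasure_apply measurableSet_closedBall] using ha R K

end LineDistortion

theorem qc_line_distortion_general {E : Type*} [NormedAddCommGroup E] [InnerProductSpace ℝ E]
    [FiniteDimensional ℝ E] [MeasurableSpace E] [BorelSpace E] {f : E ≃ₜ E}
    (hf : QuasiconformalOn univ f) (L : Submodule ℝ E) {α : ℝ} (hα₁ : finrank ℝ L < α)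
    (hα₂ : α ≤ finrank ℝ E) :
    μH[finrank ℝ L * (finrank ℝ E / α - 1)]
      {a : E | a ∈ Lᗮ ∧ μH[α] (f '' {x | ∃ v ∈ L, x = a + v}) ≠ 0} = 0 := by
  have hα₀ : 0 < α := (Nat.cast_nonneg _).trans_lt hα₁
  obtain rfl | hL := eq_or_ne L ⊥
  · have := Measure.nullSingletonClass_hausdorff E hα₀
    simp
  have hE : 2 ≤ finrank ℝ E := by
    have hL₁ : 1 ≤ finrank ℝ L := Submodule.one_le_finrank_iff.2 hL
    have hLE : finrank ℝ L < finrank ℝ E := by exact_mod_cast hα₁.trans_le hα₂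
    lia
  have : Nontrivial E := nontrivial_of_finrank_pos (R := ℝ) (by lia)
  obtain ⟨M, hM, hW⟩ := hf.exists_weaklyQuasisymmetricAt
  set β : ℝ := finrank ℝ L * (finrank ℝ E / α - 1)
  have hβ₀ : 0 ≤ β := mul_nonneg (Nat.cast_nonneg _) (sub_nonneg.2 ((one_le_div hα₀).2 hα₂))
  have hβd : β < finrank ℝ Lᗮ :=
    finrank_mul_finrank_div_sub_one_lt_finrank_orthogonal L (by lia) hα₁
  have hexc : {a : E | a ∈ Lᗮ ∧ μH[α] (f '' {x | ∃ v ∈ L, x = a + v}) ≠ 0} ⊆ ⋃ (R : ℕ) (K : ℕ),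
      (↑) '' {a : Lᗮ | ∀ᶠ r in 𝓝[>] 0, ENNReal.ofReal r ^ β ≤
        K * projectedImageMeasure L f Measure.addHaar (R + 1) (closedBall a r)} := by
    rintro a ⟨haL, ha⟩
    lift a to Lᗮ using haL
    rw [setOf_exists_mem_eq_add_eq_preimage_orthogonalProjectionOnto] at ha
    obtain ⟨R, K, hRK⟩ :=
      exists_eventually_rpow_le_projectedImageMeasure L Measure.addHaar hM hW hα₀ hα₂ ha
    exact mem_iUnion₂.2 ⟨R, K, a, hRK, rfl⟩
  refine measure_mono_null hexc (measure_iUnion_null fun R => measure_iUnion_null fun K => ?_)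
  rw [isometry_subtype_coe.hausdorffMeasure_image (.inl hβ₀)]
  exact hausdorffMeasure_eq_zero_of_frequently_rpow_le _ hβ₀ hβd
    (projectedImageMeasure_absolutelyContinuous hE hM hW) (ENNReal.natCast_ne_top K)
    fun a ha => Eventually.frequently ha

/-- **Balogh–Monti–Tyson (corollary for quasiconformal maps).** If `f : ℝⁿ → ℝⁿ`, `n ≥ 2`,
is a quasiconformal homeomorphism, `L` is a one-dimensional linear subspace of `ℝⁿ`,
`α ∈ (1, n)` and `β = n/α - 1`, then the set of `a ∈ L^⊥` with `H^α(f(a + L)) ≠ 0`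
has `H^β`-measure zero. -/
theorem qc_line_distortion
    (n : ℕ) (hn : 2 ≤ n)
    (f : EuclideanSpace ℝ (Fin n) ≃ₜ EuclideanSpace ℝ (Fin n))
    (hf : QuasiconformalOn Set.univ ⇑f)
    (L : Submodule ℝ (EuclideanSpace ℝ (Fin n))) (hL : Module.finrank ℝ L = 1)
    (α : ℝ) (hα₁ : 1 < α) (hα₂ : α < n)
    (β : ℝ) (hβ : β = (n : ℝ) / α - 1) :
    μH[β] {a : EuclideanSpace ℝ (Fin n) |
      a ∈ Lᗮ ∧ μH[α] (⇑f '' {x | ∃ v ∈ L, x = a + v}) ≠ 0} = 0 := by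
  simpa [hL, ← hβ] using qc_line_distortion_general hf L (α := α)
    (by simpa [hL] using hα₁) (by simpa using hα₂.le)
end
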